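/- (Theorem 1.3(i): sharp two-sided bounds for the extinction time in the good fast diffusion range.) Let d ≥ 3 and m_c < m < 1, where m_c = (d−2)/d. There exist positive constants c₁ and c₂ depending only on m and d such that: if u solves the homogeneous Dirichlet problem for the FDE ∂ₜu = Δ(u^m) on a ball B_R(x₀) ⊂ ℝ^d with nonnegative initial data u₀ ∈ L¹(B_R(x₀)), u₀ not identically zero, and extinction time T, then c₁ ‖u₀‖_{L¹(B_{R/3}(x₀))}^{1−m} R^{2−d(1−m)} ≤ T ≤ c₂ ‖u₀‖_{L¹(B_R(x₀))}^{1−m} R^{2−d(1−m)}. -/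

import Mathlib

open MeasureTheory Metric Set Real

/-- The spatial Laplacian of `f : ℝ^d → ℝ` at a point, as the sum of second
coordinate derivatives. -/
noncomputable def spaceLap {d : ℕ} (f : EuclideanSpace ℝ (Fin d) → ℝ)
    (x : EuclideanSpace ℝ (Fin d)) : ℝ :=
  ∑ i : Fin d, fderiv ℝ (fun y => fderiv ℝ f y (EuclideanSpace.single i 1)) x
    (EuclideanSpace.single i 1)

/-- `u` is a classical solution of the fast diffusion equation `∂ₜ u = Δ(u^m)`
on the space-time set `Q`: it is positive and smooth on `Q` and satisfies the
equation pointwise on `Q`. -/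
def IsFDESol {d : ℕ} (m : ℝ) (Q : Set (ℝ × EuclideanSpace ℝ (Fin d)))
    (u : ℝ → EuclideanSpace ℝ (Fin d) → ℝ) : Prop :=
  (∀ p ∈ Q, 0 < u p.1 p.2) ∧
  ContDiffOn ℝ (⊤ : ℕ∞) (fun p : ℝ × EuclideanSpace ℝ (Fin d) => u p.1 p.2) Q ∧
  ∀ p ∈ Q, deriv (fun s => u s p.2) p.1 = spaceLap (fun y => u p.1 y ^ m) p.2

/-- `u` solves the homogeneous Dirichlet problem for the FDE `∂ₜ u = Δ(u^m)` on the
ball `B_ρ(x₀)` with initial data `u₀` and extinction time `T`. -/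
def IsDirichletSol {d : ℕ} (m : ℝ) (x₀ : EuclideanSpace ℝ (Fin d)) (ρ T : ℝ)
    (u : ℝ → EuclideanSpace ℝ (Fin d) → ℝ) (u₀ : EuclideanSpace ℝ (Fin d) → ℝ) : Prop :=
  (∀ t ∈ Icc 0 T, ∀ x ∈ closedBall x₀ ρ, 0 ≤ u t x) ∧
  ContinuousOn (fun p : ℝ × EuclideanSpace ℝ (Fin d) => u p.1 p.2)
    (Icc 0 T ×ˢ closedBall x₀ ρ) ∧
  IsFDESol m (Ioo 0 T ×ˢ ball x₀ ρ) u ∧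
  (∀ x ∈ ball x₀ ρ, u 0 x = u₀ x) ∧
  (∀ t ∈ Ioc 0 T, ∀ x ∈ sphere x₀ ρ, u t x = 0) ∧
  (∀ x ∈ closedBall x₀ ρ, u T x = 0) ∧
  ∀ t ∈ Ioo 0 T, ∃ x ∈ ball x₀ ρ, u t x ≠ 0

abbrev EE (d : ℕ) := EuclideanSpace ℝ (Fin d)

lemma spaceLap_comp {d : ℕ} {f : EE d → ℝ} {x : EE d} {h h' : ℝ → ℝ} {h2 : ℝ}
    (hf : ContDiffAt ℝ 2 f x) (hh : ∀ᶠ y in nhds (f x), HasDerivAt h (h' y) y)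
    (hh2 : HasDerivAt h' h2 (f x)) :
    spaceLap (fun y => h (f y)) x =
      h2 * ∑ i : Fin d, (fderiv ℝ f x (EuclideanSpace.single i 1)) ^ 2
        + h' (f x) * spaceLap f x := by
  unfold spaceLap
  rw [Finset.mul_sum, Finset.mul_sum, ← Finset.sum_add_distrib]
  refine Finset.sum_congr rfl fun i _ => ?_
  have h1 : ∀ᶠ y in nhds x, DifferentiableAt ℝ f y := by
    filter_upwards [hf.eventually (by simp)] with y hy
    exact hy.differentiableAt (by norm_num)
  have h3 : ∀ᶠ y in nhds x, HasDerivAt h (h' (f y)) (f y) :=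
    hf.continuousAt.eventually hh
  have h4 : (fun y => fderiv ℝ (fun y => h (f y)) y (EuclideanSpace.single i 1)) =ᶠ[nhds x]
      fun y => h' (f y) * fderiv ℝ f y (EuclideanSpace.single i 1) := by
    filter_upwards [h1, h3] with y hy1 hy3
    have := (hy3.comp_hasFDerivAt y hy1.hasFDerivAt).fderiv
    have h5 : fderiv ℝ (fun y => h (f y)) y = h' (f y) • fderiv ℝ f y := this
    rw [h5]; simp
  rw [h4.fderiv_eq]
  have h6 : DifferentiableAt ℝ (fun y => fderiv ℝ f y (EuclideanSpace.single i 1)) x := by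
    have : ContDiffAt ℝ 1 (fderiv ℝ f) x := hf.fderiv_right (by norm_num)
    exact (this.differentiableAt (by norm_num)).clm_apply (differentiableAt_const _)
  have h7 : HasFDerivAt (fun y => h' (f y)) (h2 • fderiv ℝ f x) x :=
    hh2.comp_hasFDerivAt x (h1.self_of_nhds).hasFDerivAt
  have := (h7.mul h6.hasFDerivAt).fderiv
  have h8 : fderiv ℝ (fun y => h' (f y) * fderiv ℝ f y (EuclideanSpace.single i 1)) x = _ := this
  rw [h8]
  simp
  ring

lemma spaceLap_eventuallyEq {d : ℕ} {f g : EE d → ℝ} {x : EE d} (h : f =ᶠ[nhds x] g) :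
    spaceLap f x = spaceLap g x := by
  unfold spaceLap
  refine Finset.sum_congr rfl fun i _ => ?_
  have : (fun y => fderiv ℝ f y (EuclideanSpace.single i 1)) =ᶠ[nhds x]
      fun y => fderiv ℝ g y (EuclideanSpace.single i 1) := by
    filter_upwards [h.eventuallyEq_nhds] with y hy
    rw [hy.fderiv_eq]
  rw [this.fderiv_eq]

lemma contDiff_pd {d : ℕ} {f : EE d → ℝ} {n : ℕ} (hf : ContDiff ℝ (n + 1) f) (v : EE d) :
    ContDiff ℝ n (fun y => fderiv ℝ f y v) :=
  (hf.fderiv_right (le_refl _)).clm_apply contDiff_const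

lemma continuous_spaceLap {d : ℕ} {f : EE d → ℝ} (hf : ContDiff ℝ 2 f) :
    Continuous (spaceLap f) := by
  unfold spaceLap
  refine continuous_finsetSum _ fun i _ => ?_
  have h1 : ContDiff ℝ 1 (fun y => fderiv ℝ f y (EuclideanSpace.single i 1)) :=
    contDiff_pd (n := 1) (by norm_num; exact hf) _
  exact (contDiff_pd (n := 0) (by norm_num; exact h1) _).continuous

lemma ibp {d : ℕ} (f g : EE d → ℝ) (hf : ContDiff ℝ 2 f) (hg : ContDiff ℝ 2 g)
    (hs : HasCompactSupport f) :
    ∫ x, spaceLap f x * g x = ∫ x, f x * spaceLap g x := by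
  have hf1 : ∀ i : Fin d, ContDiff ℝ 1 (fun y => fderiv ℝ f y (EuclideanSpace.single i 1)) :=
    fun i => contDiff_pd (n := 1) (by norm_num; exact hf) _
  have hg1 : ∀ i : Fin d, ContDiff ℝ 1 (fun y => fderiv ℝ g y (EuclideanSpace.single i 1)) :=
    fun i => contDiff_pd (n := 1) (by norm_num; exact hg) _
  have hf2 : ∀ i : Fin d, Continuous (fun x => fderiv ℝ (fun y => fderiv ℝ f y (EuclideanSpace.single i 1)) x (EuclideanSpace.single i 1)) :=
    fun i => (contDiff_pd (n := 0) (by norm_num; exact hf1 i) _).continuous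
  have hg2 : ∀ i : Fin d, Continuous (fun x => fderiv ℝ (fun y => fderiv ℝ g y (EuclideanSpace.single i 1)) x (EuclideanSpace.single i 1)) :=
    fun i => (contDiff_pd (n := 0) (by norm_num; exact hg1 i) _).continuous
  have hs1 : ∀ i : Fin d, HasCompactSupport (fun y => fderiv ℝ f y (EuclideanSpace.single i 1)) :=
    fun i => hs.fderiv_apply (𝕜 := ℝ) _
  have hs2 : ∀ i : Fin d, HasCompactSupport (fun x => fderiv ℝ (fun y => fderiv ℝ f y (EuclideanSpace.single i 1)) x (EuclideanSpace.single i 1)) :=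
    fun i => (hs1 i).fderiv_apply (𝕜 := ℝ) _
  unfold spaceLap
  simp_rw [Finset.sum_mul, Finset.mul_sum]
  rw [integral_finsetSum, integral_finsetSum]
  · refine Finset.sum_congr rfl fun i _ => ?_
    have e1 := integral_mul_fderiv_eq_neg_fderiv_mul_of_integrable (μ := (volume : Measure (EE d)))
      (f := fun y => fderiv ℝ f y (EuclideanSpace.single i 1)) (g := g)
      (v := EuclideanSpace.single i 1)
      (((hf2 i).mul hg.continuous).integrable_of_hasCompactSupport (hs2 i).mul_right)
      (((hf1 i).continuous.mul (hg1 i).continuous).integrable_of_hasCompactSupport (hs1 i).mul_right)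
      (((hf1 i).continuous.mul hg.continuous).integrable_of_hasCompactSupport (hs1 i).mul_right)
      (fun x _ => (hf1 i).differentiable (by norm_num) x)
      (fun x _ => hg.differentiable (by norm_num) x)
    have e2 := integral_mul_fderiv_eq_neg_fderiv_mul_of_integrable (μ := (volume : Measure (EE d)))
      (f := f) (g := fun y => fderiv ℝ g y (EuclideanSpace.single i 1))
      (v := EuclideanSpace.single i 1)
      (((hf1 i).continuous.mul (hg1 i).continuous).integrable_of_hasCompactSupport (hs1 i).mul_right)
      ((hf.continuous.mul (hg2 i)).integrable_of_hasCompactSupport hs.mul_right)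
      ((hf.continuous.mul (hg1 i).continuous).integrable_of_hasCompactSupport hs.mul_right)
      (fun x _ => hf.differentiable (by norm_num) x)
      (fun x _ => (hg1 i).differentiable (by norm_num) x)
    linarith
  · intro i _
    exact ((hf.continuous.mul (hg2 i)).integrable_of_hasCompactSupport hs.mul_right)
  · intro i _
    exact (((hf2 i).mul hg.continuous).integrable_of_hasCompactSupport (hs2 i).mul_right)

/-- normalized extension of a Dirichlet solution -/
structure NSol {d : ℕ} (m : ℝ) (x₀ : EE d) (R T : ℝ) (U : ℝ → EE d → ℝ) : Prop where
  m0 : 0 < m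
  R0 : 0 < R
  T0 : 0 < T
  cont : Continuous (fun p : ℝ × EE d => U p.1 p.2)
  nonneg : ∀ t x, 0 ≤ U t x
  zero : ∀ t x, x ∉ ball x₀ R → U t x = 0
  pos : ∀ t ∈ Ioo 0 T, ∀ x ∈ ball x₀ R, 0 < U t x
  smooth : ∀ t ∈ Ioo 0 T, ∀ x ∈ ball x₀ R,
    ContDiffAt ℝ (⊤ : ℕ∞) (fun p : ℝ × EE d => U p.1 p.2) (t, x)
  pde : ∀ t ∈ Ioo 0 T, ∀ x ∈ ball x₀ R,
    deriv (fun s => U s x) t = spaceLap (fun y => U t y ^ m) x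
  ext : ∀ x, U T x = 0

open Classical in
/-- the extension -/
noncomputable def extU {d : ℕ} (x₀ : EE d) (R T : ℝ) (u : ℝ → EE d → ℝ) (t : ℝ) (x : EE d) : ℝ :=
  if dist x x₀ ≤ R then u (max 0 (min T t)) x else 0

lemma extU_eq {d : ℕ} {x₀ : EE d} {R T : ℝ} {u : ℝ → EE d → ℝ} {t : ℝ} {x : EE d}
    (ht : t ∈ Icc 0 T) (hx : x ∈ closedBall x₀ R) : extU x₀ R T u t x = u t x := by
  unfold extU
  rw [if_pos (by simpa using hx), min_eq_right ht.2, max_eq_right ht.1]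

lemma nsol_of_dirichlet {d : ℕ} {m : ℝ} {x₀ : EE d} {R T : ℝ} {u : ℝ → EE d → ℝ} {u₀ : EE d → ℝ}
    (hm : 0 < m) (hR : 0 < R) (hT : 0 < T) (h : IsDirichletSol m x₀ R T u u₀) :
    NSol m x₀ R T (extU x₀ R T u) := by
  obtain ⟨h1, h2, ⟨h3, h4, h5⟩, h6, h7, h8, h9⟩ := h
  have hc : ∀ t, max 0 (min T t) ∈ Icc 0 T := fun t =>
    ⟨le_max_left _ _, max_le hT.le (min_le_left _ _)⟩
  have hsp : ∀ t ∈ Icc 0 T, ∀ x ∈ sphere x₀ R, u t x = 0 := by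
    intro t ht x hx
    have hcont : ContinuousOn (fun s => u s x) (Icc 0 T) := by
      refine h2.comp (f := fun s => (s, x)) (by fun_prop) ?_
      intro s hs
      exact ⟨hs, sphere_subset_closedBall hx⟩
    have hcl : closure (Ioc 0 T) = Icc 0 T := closure_Ioc hT.ne
    have : Set.EqOn (fun s => u s x) (fun _ => 0) (Icc 0 T) := by
      refine Set.EqOn.of_subset_closure (s := Ioc 0 T) ?_ hcont continuousOn_const
        Ioc_subset_Icc_self (by rw [hcl])
      intro s hs
      exact h7 s hs x hx
    exact this ht
  have hopen : IsOpen (Ioo 0 T ×ˢ ball x₀ R) := isOpen_Ioo.prod isOpen_ball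
  have hev : ∀ t ∈ Ioo 0 T, ∀ x ∈ ball x₀ R, ∀ᶠ p in nhds (t, x),
      extU x₀ R T u p.1 p.2 = u p.1 p.2 := by
    intro t ht x hx
    filter_upwards [hopen.mem_nhds (show (t, x) ∈ Ioo 0 T ×ˢ ball x₀ R from ⟨ht, hx⟩)] with p hp
    exact extU_eq (Ioo_subset_Icc_self hp.1) (ball_subset_closedBall hp.2)
  refine ⟨hm, hR, hT, ?_, ?_, ?_, ?_, ?_, ?_, ?_⟩
  · unfold extU
    refine continuous_if_le (f := fun p : ℝ × EE d => dist p.2 x₀) (g := fun _ => R)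
      (f' := fun p : ℝ × EE d => u (max 0 (min T p.1)) p.2) (g' := fun _ => 0)
      (by fun_prop) (by fun_prop) ?_ continuousOn_const ?_
    · refine h2.comp (f := fun p : ℝ × EE d => (max 0 (min T p.1), p.2)) (by fun_prop) ?_
      intro p hp
      exact ⟨hc _, by simpa using hp⟩
    · intro p hp
      exact hsp _ (hc _) _ (mem_sphere.2 hp)
  · intro t x
    unfold extU
    split_ifs with hx
    · exact h1 _ (hc t) _ (by simpa using hx)
    · exact le_rfl
  · intro t x hx
    unfold extU
    split_ifs with hx'
    · refine hsp _ (hc t) _ ?_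
      simp only [mem_ball, not_lt] at hx
      exact le_antisymm hx' hx
    · rfl
  · intro t ht x hx
    rw [extU_eq (Ioo_subset_Icc_self ht) (ball_subset_closedBall hx)]
    exact h3 (t, x) ⟨ht, hx⟩
  · intro t ht x hx
    have hn : Ioo 0 T ×ˢ ball x₀ R ∈ nhds (t, x) := hopen.mem_nhds ⟨ht, hx⟩
    have h10 := h4.contDiffAt hn
    exact h10.congr_of_eventuallyEq (hev t ht x hx)
  · intro t ht x hx
    have e1 : (fun s => extU x₀ R T u s x) =ᶠ[nhds t] fun s => u s x := by
      have : Filter.Tendsto (fun s : ℝ => (s, x)) (nhds t) (nhds (t, x)) :=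
        (Continuous.tendsto (by fun_prop) t)
      exact this.eventually (hev t ht x hx)
    have e2 : (fun y => extU x₀ R T u t y ^ m) =ᶠ[nhds x] fun y => u t y ^ m := by
      have : Filter.Tendsto (fun y : EE d => (t, y)) (nhds x) (nhds (t, x)) :=
        (Continuous.tendsto (by fun_prop) x)
      filter_upwards [this.eventually (hev t ht x hx)] with y hy
      rw [hy]
    rw [e1.deriv_eq, spaceLap_eventuallyEq e2]
    exact h5 (t, x) ⟨ht, hx⟩
  · intro x
    unfold extU
    split_ifs with hx
    · rw [min_self, max_eq_right hT.le]
      exact h8 x (by simpa using hx)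
    · rfl

/-- smooth cutoff -/
noncomputable def etaC (δ w : ℝ) : ℝ := Real.smoothTransition (w / δ - 1)

lemma etaC_contDiff (δ : ℝ) : ContDiff ℝ 2 (etaC δ) := by
  unfold etaC
  have : ContDiff ℝ ((2 : ℕ∞) : WithTop ℕ∞) Real.smoothTransition := Real.smoothTransition.contDiff
  exact ContDiff.comp this (by fun_prop)

lemma etaC_cont (δ : ℝ) : Continuous (etaC δ) := (etaC_contDiff δ).continuous

lemma etaC_nonneg (δ w : ℝ) : 0 ≤ etaC δ w := Real.smoothTransition.nonneg _
lemma etaC_le_one (δ w : ℝ) : etaC δ w ≤ 1 := Real.smoothTransition.le_one _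

lemma etaC_zero {δ w : ℝ} (hδ : 0 < δ) (h : w ≤ δ) : etaC δ w = 0 := by
  apply Real.smoothTransition.zero_of_nonpos
  have := (div_le_one hδ).2 h
  linarith

lemma etaC_one {δ w : ℝ} (hδ : 0 < δ) (h : 2 * δ ≤ w) : etaC δ w = 1 := by
  apply Real.smoothTransition.one_of_one_le
  have := (le_div_iff₀ hδ).2 h
  linarith

lemma etaC_mono {δ : ℝ} (hδ : 0 < δ) : Monotone (etaC δ) := by
  intro a b h
  apply Real.smoothTransition.monotone
  have := div_le_div_of_nonneg_right h hδ.le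
  linarith

lemma etaC_hasDerivAt (δ w : ℝ) : HasDerivAt (etaC δ) (deriv (etaC δ) w) w :=
  ((etaC_contDiff δ).differentiable (by norm_num) w).hasDerivAt

lemma etaC_deriv_nonneg {δ : ℝ} (hδ : 0 < δ) (w : ℝ) : 0 ≤ deriv (etaC δ) w :=
  (etaC_mono hδ).deriv_nonneg

lemma etaC_deriv_zero {δ w : ℝ} (hδ : 0 < δ) (h : 2 * δ < w) : deriv (etaC δ) w = 0 := by
  have : etaC δ =ᶠ[nhds w] fun _ => 1 := by
    filter_upwards [Ioi_mem_nhds h] with y hy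
    exact etaC_one hδ (le_of_lt hy)
  rw [this.deriv_eq]; simp

/-- primitive of the cutoff in the variable `u ^ m` -/
noncomputable def betaC (δ w : ℝ) : ℝ := ∫ x in (0:ℝ)..w, etaC δ x
/-- primitive of the cutoff in the variable `u` -/
noncomputable def bigB (δ m v : ℝ) : ℝ := ∫ x in (0:ℝ)..v, etaC δ (x ^ m)

lemma betaC_hasDerivAt (δ w : ℝ) : HasDerivAt (betaC δ) (etaC δ w) w :=
  intervalIntegral.integral_hasDerivAt_right ((etaC_cont δ).intervalIntegrable _ _)
    ((etaC_cont δ).stronglyMeasurableAtFilter _ _) (etaC_cont δ).continuousAt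

lemma betaC_contDiff (δ : ℝ) : ContDiff ℝ 2 (betaC δ) := by
  have h1 : deriv (betaC δ) = etaC δ := funext fun w => (betaC_hasDerivAt δ w).deriv
  rw [show (2 : WithTop ℕ∞) = 1 + 1 by norm_num, contDiff_succ_iff_deriv]
  refine ⟨fun w => (betaC_hasDerivAt δ w).differentiableAt, by simp, ?_⟩
  rw [h1]
  exact (etaC_contDiff δ).of_le (by norm_num)

lemma bigB_cont_integrand {δ m : ℝ} (hm : 0 < m) : Continuous fun x : ℝ => etaC δ (x ^ m) :=
  (etaC_cont δ).comp (Real.continuous_rpow_const hm.le)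

lemma bigB_hasDerivAt {δ m : ℝ} (hm : 0 < m) (v : ℝ) :
    HasDerivAt (bigB δ m) (etaC δ (v ^ m)) v :=
  intervalIntegral.integral_hasDerivAt_right ((bigB_cont_integrand hm).intervalIntegrable _ _)
    ((bigB_cont_integrand hm).stronglyMeasurableAtFilter _ _) (bigB_cont_integrand hm).continuousAt

/-- common estimate for primitives of functions in `[0,1]` which are one from `a` on -/
lemma prim_bounds {g : ℝ → ℝ} (hg : Continuous g) (h0 : ∀ x, 0 ≤ g x) (h1 : ∀ x, g x ≤ 1)
    {a : ℝ} (ha : 0 ≤ a) (h2 : ∀ x, a ≤ x → g x = 1) {w : ℝ} (hw : 0 ≤ w) :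
    w - a ≤ ∫ x in (0:ℝ)..w, g x ∧ ∫ x in (0:ℝ)..w, g x ≤ w := by
  constructor
  · rcases le_total w a with h | h
    · have : 0 ≤ ∫ x in (0:ℝ)..w, g x := intervalIntegral.integral_nonneg hw fun x _ => h0 x
      linarith
    · rw [← intervalIntegral.integral_add_adjacent_intervals (b := a)
        (hg.intervalIntegrable _ _) (hg.intervalIntegrable _ _)]
      have e1 : 0 ≤ ∫ x in (0:ℝ)..a, g x := intervalIntegral.integral_nonneg ha fun x _ => h0 x
      have e2 : ∫ x in a..w, g x = ∫ x in a..w, (1:ℝ) := by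
        refine intervalIntegral.integral_congr fun x hx => ?_
        rw [uIcc_of_le h] at hx
        exact h2 x hx.1
      rw [e2]; simp; linarith
  · have : ∫ x in (0:ℝ)..w, g x ≤ ∫ x in (0:ℝ)..w, (1:ℝ) :=
      intervalIntegral.integral_mono_on hw (hg.intervalIntegrable _ _) (by simp) fun x _ => h1 x
    simpa using this

lemma betaC_bounds {δ w : ℝ} (hδ : 0 < δ) (hw : 0 ≤ w) :
    w - 2 * δ ≤ betaC δ w ∧ betaC δ w ≤ w :=
  prim_bounds (etaC_cont δ) (etaC_nonneg δ) (etaC_le_one δ) (by positivity)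
    (fun _ hx => etaC_one hδ hx) hw

lemma bigB_bounds {δ m v : ℝ} (hm : 0 < m) (hδ : 0 < δ) (hv : 0 ≤ v) :
    v - (2 * δ) ^ (1 / m) ≤ bigB δ m v ∧ bigB δ m v ≤ v := by
  refine prim_bounds (bigB_cont_integrand hm) (fun _ => etaC_nonneg δ _) (fun _ => etaC_le_one δ _)
    (by positivity) (fun x hx => etaC_one hδ ?_) hv
  have h1 : ((2 * δ) ^ (1 / m)) ^ m ≤ x ^ m := Real.rpow_le_rpow (by positivity) hx hm.le
  rwa [← Real.rpow_mul (by positivity), one_div_mul_cancel hm.ne', Real.rpow_one] at h1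

lemma betaC_zero {δ w : ℝ} (hδ : 0 < δ) (hw : w ≤ δ) : betaC δ w = 0 := by
  have e : betaC δ w = ∫ x in (0:ℝ)..w, (0:ℝ) := by
    unfold betaC
    refine intervalIntegral.integral_congr fun x hx => ?_
    apply etaC_zero hδ
    rcases le_total 0 w with h | h
    · rw [uIcc_of_le h] at hx; exact hx.2.trans hw
    · rw [uIcc_of_ge h] at hx; exact hx.2.trans hδ.le
  rw [e]; simp

namespace NSol

variable {d : ℕ} {m : ℝ} {x₀ : EE d} {R T : ℝ} {U : ℝ → EE d → ℝ}

lemma contP (h : NSol m x₀ R T U) : Continuous (fun p : ℝ × EE d => U p.1 p.2 ^ m) :=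
  h.cont.rpow_const fun _ => Or.inr h.m0.le

lemma contx (h : NSol m x₀ R T U) (t : ℝ) : Continuous (U t) :=
  h.cont.comp (f := fun x : EE d => (t, x)) (by fun_prop)

lemma contt (h : NSol m x₀ R T U) (x : EE d) : Continuous (fun t => U t x) :=
  h.cont.comp (f := fun t : ℝ => (t, x)) (by fun_prop)

lemma contPx (h : NSol m x₀ R T U) (t : ℝ) : Continuous (fun x => U t x ^ m) :=
  h.contP.comp (f := fun x : EE d => (t, x)) (by fun_prop)

lemma zeroP (h : NSol m x₀ R T U) (t : ℝ) {x : EE d} (hx : x ∉ ball x₀ R) : U t x ^ m = 0 := by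
  rw [h.zero t x hx, Real.zero_rpow h.m0.ne']

lemma ev_small (h : NSol m x₀ R T U) {δ : ℝ} (hδ : 0 < δ) (t : ℝ) {x : EE d}
    (hx : x ∉ ball x₀ R) : ∀ᶠ p : ℝ × EE d in nhds (t, x), U p.1 p.2 ^ m < δ := by
  have h1 : (fun p : ℝ × EE d => U p.1 p.2 ^ m) (t, x) < δ := by
    simp only [h.zeroP t hx]; exact hδ
  exact h.contP.continuousAt.eventually (Iio_mem_nhds h1)

lemma hasDerivAt_t (h : NSol m x₀ R T U) {t : ℝ} (ht : t ∈ Ioo 0 T) {x : EE d}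
    (hx : x ∈ ball x₀ R) :
    HasDerivAt (fun s => U s x) (fderiv ℝ (fun p : ℝ × EE d => U p.1 p.2) (t, x) (1, 0)) t := by
  have h1 := ((h.smooth t ht x hx).differentiableAt (by simp)).hasFDerivAt
  have h2 : HasDerivAt (fun s : ℝ => (s, x)) ((1 : ℝ), (0 : EE d)) t :=
    (hasDerivAt_id t).prodMk (hasDerivAt_const t x)
  exact h1.comp_hasDerivAt t h2

/-- the truncated time derivative -/
noncomputable def Psi (U : ℝ → EE d → ℝ) (m δ : ℝ) (p : ℝ × EE d) : ℝ :=
  etaC δ (U p.1 p.2 ^ m) * deriv (fun s => U s p.2) p.1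

lemma Psi_cont (h : NSol m x₀ R T U) {δ : ℝ} (hδ : 0 < δ) {t : ℝ} (ht : t ∈ Ioo 0 T) (x : EE d) :
    ContinuousAt (Psi U m δ) (t, x) := by
  by_cases hx : x ∈ ball x₀ R
  · have hopen : IsOpen (Ioo 0 T ×ˢ ball x₀ R) := isOpen_Ioo.prod isOpen_ball
    have e : Psi U m δ =ᶠ[nhds (t, x)] fun p => etaC δ (U p.1 p.2 ^ m) *
        fderiv ℝ (fun p : ℝ × EE d => U p.1 p.2) p (1, 0) := by
      filter_upwards [hopen.mem_nhds (show (t, x) ∈ Ioo 0 T ×ˢ ball x₀ R from ⟨ht, hx⟩)] with p hp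
      unfold Psi
      rw [(h.hasDerivAt_t hp.1 hp.2).deriv]
    rw [continuousAt_congr e]
    refine ContinuousAt.mul ((etaC_cont δ).comp h.contP).continuousAt ?_
    have h1 : ContDiffAt ℝ 1 (fun p : ℝ × EE d => U p.1 p.2) (t, x) :=
      (h.smooth t ht x hx).of_le (by exact_mod_cast le_top)
    have h2 := h1.fderiv_right (m := 0) (by norm_num)
    exact h2.continuousAt.clm_apply continuousAt_const
  · have e : Psi U m δ =ᶠ[nhds (t, x)] fun p => 0 := by
      filter_upwards [h.ev_small hδ t hx] with p hp
      unfold Psi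
      rw [etaC_zero hδ hp.le, zero_mul]
    rw [continuousAt_congr e]
    exact continuousAt_const

lemma ftc (h : NSol m x₀ R T U) {δ : ℝ} (hδ : 0 < δ) {s t : ℝ} (hs : 0 < s) (hst : s ≤ t)
    (ht : t < T) (x : EE d) :
    bigB δ m (U t x) - bigB δ m (U s x) = ∫ τ in s..t, Psi U m δ (τ, x) := by
  have hin : ∀ τ ∈ Icc s t, τ ∈ Ioo 0 T := fun τ hτ => ⟨hs.trans_le hτ.1, hτ.2.trans_lt ht⟩
  by_cases hx : x ∈ ball x₀ R
  · symm
    refine intervalIntegral.integral_eq_sub_of_hasDerivAt (f := fun τ => bigB δ m (U τ x)) ?_ ?_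
    · intro τ hτ
      rw [uIcc_of_le hst] at hτ
      have h1 := h.hasDerivAt_t (hin τ hτ) hx
      have h2 := (bigB_hasDerivAt (δ := δ) h.m0 (U τ x)).comp τ h1
      unfold Psi
      rw [h1.deriv]
      exact h2
    · refine ContinuousOn.intervalIntegrable ?_
      intro τ hτ
      rw [uIcc_of_le hst] at hτ
      have h1 := h.Psi_cont hδ (hin τ hτ) x
      have h2 : ContinuousAt (fun τ : ℝ => (τ, x)) τ := by fun_prop
      exact (ContinuousAt.comp (f := fun τ : ℝ => (τ, x)) h1 h2).continuousWithinAt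
  · have e : ∀ τ, Psi U m δ (τ, x) = 0 := by
      intro τ
      unfold Psi
      simp only
      rw [h.zeroP τ hx, etaC_zero hδ hδ.le, zero_mul]
    simp [e, h.zero _ x hx]

lemma slice_contDiff (h : NSol m x₀ R T U) {δ : ℝ} (hδ : 0 < δ) {t : ℝ} (ht : t ∈ Ioo 0 T) :
    ContDiff ℝ 2 (fun x => betaC δ (U t x ^ m)) := by
  rw [contDiff_iff_contDiffAt]
  intro x
  by_cases hx : x ∈ ball x₀ R
  · have h1 : ContDiffAt ℝ 2 (fun p : ℝ × EE d => U p.1 p.2) (t, x) :=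
      (h.smooth t ht x hx).of_le (WithTop.coe_le_coe.2 (le_top : (2:ℕ∞) ≤ ⊤))
    have h2 : ContDiffAt ℝ 2 (fun y : EE d => U t y) x :=
      ContDiffAt.comp (f := fun y : EE d => (t, y)) x h1 (by fun_prop)
    have h3 : ContDiffAt ℝ 2 (fun y : EE d => U t y ^ m) x :=
      h2.rpow_const_of_ne (h.pos t ht x hx).ne'
    exact (betaC_contDiff δ).contDiffAt.comp x h3
  · have e : (fun x => betaC δ (U t x ^ m)) =ᶠ[nhds x] fun _ => 0 := by
      have h2 : ContinuousAt (fun y : EE d => (t, y)) x := by fun_prop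
      filter_upwards [h2.eventually (h.ev_small hδ t hx)] with y hy
      exact betaC_zero hδ hy.le
    exact contDiffAt_const.congr_of_eventuallyEq e

lemma slice_lap (h : NSol m x₀ R T U) {δ : ℝ} (hδ : 0 < δ) {t : ℝ} (ht : t ∈ Ioo 0 T) {c : ℝ}
    {x : EE d} (hc : x ∈ ball x₀ R → 0 ≤ c ∨ 2 * δ < U t x ^ m) :
    Psi U m δ (t, x) * c ≤ spaceLap (fun x => betaC δ (U t x ^ m)) x * c := by
  by_cases hx : x ∈ ball x₀ R
  · have h1 : ContDiffAt ℝ 2 (fun p : ℝ × EE d => U p.1 p.2) (t, x) :=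
      (h.smooth t ht x hx).of_le (WithTop.coe_le_coe.2 (le_top : (2:ℕ∞) ≤ ⊤))
    have h2 : ContDiffAt ℝ 2 (fun y : EE d => U t y) x :=
      ContDiffAt.comp (f := fun y : EE d => (t, y)) x h1 (by fun_prop)
    have h3 : ContDiffAt ℝ 2 (fun y : EE d => U t y ^ m) x :=
      h2.rpow_const_of_ne (h.pos t ht x hx).ne'
    rw [spaceLap_comp (f := fun y => U t y ^ m) h3
      (Filter.Eventually.of_forall (betaC_hasDerivAt δ)) (etaC_hasDerivAt δ _)]
    unfold Psi
    rw [h.pde t ht x hx]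
    rw [add_mul]
    have h4 : 0 ≤ ∑ i : Fin d, (fderiv ℝ (fun y => U t y ^ m) x (EuclideanSpace.single i 1)) ^ 2 :=
      Finset.sum_nonneg fun i _ => sq_nonneg _
    have h5 : 0 ≤ deriv (etaC δ) (U t x ^ m) *
        (∑ i : Fin d, (fderiv ℝ (fun y => U t y ^ m) x (EuclideanSpace.single i 1)) ^ 2) * c := by
      rcases hc hx with hc | hc
      · exact mul_nonneg (mul_nonneg (etaC_deriv_nonneg hδ _) h4) hc
      · rw [etaC_deriv_zero hδ hc]; simp
    linarith
  · have e : (fun x => betaC δ (U t x ^ m)) =ᶠ[nhds x] fun _ => 0 := by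
      have h2 : ContinuousAt (fun y : EE d => (t, y)) x := by fun_prop
      filter_upwards [h2.eventually (h.ev_small hδ t hx)] with y hy
      exact betaC_zero hδ hy.le
    rw [spaceLap_eventuallyEq e]
    unfold Psi
    simp only
    rw [h.zeroP t hx, etaC_zero hδ hδ.le]
    simp [spaceLap]

lemma slice_ineq (h : NSol m x₀ R T U) {δ : ℝ} (hδ : 0 < δ) {t : ℝ} (ht : t ∈ Ioo 0 T)
    {φ : EE d → ℝ} (hφ : ContDiff ℝ 2 φ)
    (hc : ∀ x ∈ ball x₀ R, 0 ≤ φ x ∨ 2 * δ < U t x ^ m) :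
    ∫ x in closedBall x₀ R, Psi U m δ (t, x) * φ x ≤
      ∫ x in closedBall x₀ R, betaC δ (U t x ^ m) * spaceLap φ x := by
  have hK : IsCompact (closedBall x₀ R) := isCompact_closedBall _ _
  have hsm := h.slice_contDiff hδ ht
  have hz : ∀ x, x ∉ closedBall x₀ R → betaC δ (U t x ^ m) = 0 := by
    intro x hx
    rw [h.zeroP t fun h' => hx (ball_subset_closedBall h')]
    exact betaC_zero hδ hδ.le
  have hsupp : HasCompactSupport (fun x => betaC δ (U t x ^ m)) :=
    HasCompactSupport.intro hK hz
  have e1 : ∫ x in closedBall x₀ R, spaceLap (fun x => betaC δ (U t x ^ m)) x * φ x =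
      ∫ x, spaceLap (fun x => betaC δ (U t x ^ m)) x * φ x := by
    refine setIntegral_eq_integral_of_forall_compl_eq_zero fun x hx => ?_
    have e : (fun x => betaC δ (U t x ^ m)) =ᶠ[nhds x] fun _ => 0 := by
      filter_upwards [isClosed_closedBall.isOpen_compl.mem_nhds hx] with y hy
      exact hz y hy
    rw [spaceLap_eventuallyEq e]
    simp [spaceLap]
  have e2 : ∫ x in closedBall x₀ R, betaC δ (U t x ^ m) * spaceLap φ x =
      ∫ x, betaC δ (U t x ^ m) * spaceLap φ x := by
    refine setIntegral_eq_integral_of_forall_compl_eq_zero fun x hx => ?_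
    rw [hz x hx, zero_mul]
  rw [e2, ← ibp _ _ hsm hφ hsupp, ← e1]
  refine setIntegral_mono_on ?_ ?_ isClosed_closedBall.measurableSet ?_
  · refine ContinuousOn.integrableOn_compact hK ?_
    intro x _
    have h1 := h.Psi_cont hδ ht x
    have h2 : ContinuousAt (fun y : EE d => (t, y)) x := by fun_prop
    exact ((ContinuousAt.comp (f := fun y : EE d => (t, y)) h1 h2).mul
      hφ.continuous.continuousAt).continuousWithinAt
  · exact ((continuous_spaceLap hsm).mul hφ.continuous).continuousOn.integrableOn_compact hK
  · intro x _
    exact h.slice_lap hδ ht (hc x)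

end NSol

namespace NSol

variable {d : ℕ} {m : ℝ} {x₀ : EE d} {R T : ℝ} {U : ℝ → EE d → ℝ}

lemma cont_par (hK : Continuous (fun p : ℝ × EE d => U p.1 p.2)) {g : EE d → ℝ}
    (hg : Continuous g) :
    Continuous fun t => ∫ x in closedBall x₀ R, U t x * g x :=
  continuous_parametric_integral_of_continuous (f := fun t x => U t x * g x)
    (hK.mul (hg.comp continuous_snd)) (isCompact_closedBall _ _)

lemma fund_delta (h : NSol m x₀ R T U) {δ : ℝ} (hδ : 0 < δ) {s t : ℝ} (hs : 0 < s) (hst : s ≤ t)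
    (ht : t < T) {φ : EE d → ℝ} (hφ : ContDiff ℝ 2 φ)
    (hc : ∀ τ ∈ Icc s t, ∀ x ∈ ball x₀ R, 0 ≤ φ x ∨ 2 * δ < U τ x ^ m) :
    (∫ x in closedBall x₀ R, bigB δ m (U t x) * φ x)
      - (∫ x in closedBall x₀ R, bigB δ m (U s x) * φ x) ≤
      ∫ τ in s..t, ∫ x in closedBall x₀ R, betaC δ (U τ x ^ m) * spaceLap φ x := by
  have hin : ∀ τ ∈ Icc s t, τ ∈ Ioo 0 T := fun τ hτ => ⟨hs.trans_le hτ.1, hτ.2.trans_lt ht⟩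
  have hK : IsCompact (closedBall x₀ R) := isCompact_closedBall _ _
  have hBc : Continuous (bigB δ m) :=
    continuous_iff_continuousAt.2 fun v => (bigB_hasDerivAt h.m0 v).continuousAt
  have hint : ∀ τ, IntegrableOn (fun x => bigB δ m (U τ x) * φ x) (closedBall x₀ R) := fun τ =>
    ((hBc.comp (h.contx τ)).mul hφ.continuous).continuousOn.integrableOn_compact hK
  have hprod : IntegrableOn (fun p : EE d × ℝ => Psi U m δ (p.2, p.1) * φ p.1)
      (closedBall x₀ R ×ˢ Icc s t) := by
    refine ContinuousOn.integrableOn_compact (hK.prod isCompact_Icc) ?_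
    intro p hp
    have h1 := h.Psi_cont hδ (hin p.2 hp.2) p.1
    have h2 : ContinuousAt (fun q : EE d × ℝ => (q.2, q.1)) p := by fun_prop
    exact ((ContinuousAt.comp (f := fun q : EE d × ℝ => (q.2, q.1)) h1 h2).mul
      (hφ.continuous.comp continuous_fst).continuousAt).continuousWithinAt
  have hprod' : Integrable (Function.uncurry fun (x : EE d) (τ : ℝ) => Psi U m δ (τ, x) * φ x)
      ((volume.restrict (closedBall x₀ R)).prod (volume.restrict (Ioc s t))) := by
    rw [Measure.prod_restrict]
    exact hprod.mono_set (prod_mono le_rfl Ioc_subset_Icc_self)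
  rw [← integral_sub (hint t) (hint s)]
  have e1 : ∀ x, bigB δ m (U t x) * φ x - bigB δ m (U s x) * φ x =
      ∫ τ in Ioc s t, Psi U m δ (τ, x) * φ x := by
    intro x
    rw [← sub_mul, h.ftc hδ hs hst ht x, intervalIntegral.integral_of_le hst,
      integral_mul_const]
  simp_rw [e1]
  rw [integral_integral_swap hprod', intervalIntegral.integral_of_le hst]
  have hb : Continuous (betaC δ) := (betaC_contDiff δ).continuous
  refine setIntegral_mono_on ?_ ?_ measurableSet_Ioc ?_
  · exact hprod'.integral_prod_right
  · have : Continuous fun τ => ∫ x in closedBall x₀ R, betaC δ (U τ x ^ m) * spaceLap φ x :=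
      cont_par (U := fun τ x => betaC δ (U τ x ^ m)) (hb.comp h.contP) (continuous_spaceLap hφ)
    exact (this.continuousOn.integrableOn_compact isCompact_Icc).mono_set Ioc_subset_Icc_self
  · intro τ hτ
    have hτ' := Ioc_subset_Icc_self hτ
    exact h.slice_ineq hδ (hin τ hτ') hφ (hc τ hτ')

lemma abs_int_le {f g φ : EE d → ℝ} {c : ℝ} (hf : Continuous f) (hg : Continuous g)
    (hφ : Continuous φ) (hfg : ∀ x, |f x - g x| ≤ c) :
    |(∫ x in closedBall x₀ R, f x * φ x) - ∫ x in closedBall x₀ R, g x * φ x| ≤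
      c * ∫ x in closedBall x₀ R, |φ x| := by
  have hK : IsCompact (closedBall x₀ R) := isCompact_closedBall _ _
  have i1 : IntegrableOn (fun x => f x * φ x) (closedBall x₀ R) :=
    (hf.mul hφ).continuousOn.integrableOn_compact hK
  have i2 : IntegrableOn (fun x => g x * φ x) (closedBall x₀ R) :=
    (hg.mul hφ).continuousOn.integrableOn_compact hK
  rw [← integral_sub i1 i2, ← integral_const_mul]
  refine (abs_integral_le_integral_abs).trans ?_
  refine integral_mono ?_ ?_ ?_
  · exact (((hf.mul hφ).sub (hg.mul hφ)).abs).continuousOn.integrableOn_compact hK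
  · exact (hφ.abs.const_mul c).continuousOn.integrableOn_compact hK
  · intro x
    simp only
    rw [← sub_mul, abs_mul]
    exact mul_le_mul_of_nonneg_right (hfg x) (abs_nonneg _)

lemma fund_open (h : NSol m x₀ R T U) {s t : ℝ} (hs : 0 < s) (hst : s ≤ t)
    (ht : t < T) {φ : EE d → ℝ} (hφ : ContDiff ℝ 2 φ) {δ₀ : ℝ} (hδ₀ : 0 < δ₀)
    (hc : ∀ τ ∈ Icc s t, ∀ x ∈ ball x₀ R, 0 ≤ φ x ∨ δ₀ ≤ U τ x ^ m) :
    (∫ x in closedBall x₀ R, U t x * φ x) - (∫ x in closedBall x₀ R, U s x * φ x) ≤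
      ∫ τ in s..t, ∫ x in closedBall x₀ R, U τ x ^ m * spaceLap φ x := by
  have hm := h.m0
  set A := ∫ x in closedBall x₀ R, |φ x|
  set A' := ∫ x in closedBall x₀ R, |spaceLap φ x|
  set L := (∫ x in closedBall x₀ R, U t x * φ x) - (∫ x in closedBall x₀ R, U s x * φ x)
  set Q := ∫ τ in s..t, ∫ x in closedBall x₀ R, U τ x ^ m * spaceLap φ x
  have hBc : ∀ δ, Continuous (bigB δ m) := fun δ =>
    continuous_iff_continuousAt.2 fun v => (bigB_hasDerivAt h.m0 v).continuousAt
  have hb : ∀ δ, Continuous (betaC δ) := fun δ => (betaC_contDiff δ).continuous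
  have key : ∀ᶠ δ in nhdsWithin (0:ℝ) (Ioi 0),
      L ≤ Q + (2 * ((2 * δ) ^ (1 / m) * A) + (t - s) * (2 * δ * A')) := by
    filter_upwards [Ioo_mem_nhdsGT (show (0:ℝ) < δ₀ / 2 by positivity)] with δ hδ
    have hδ0 : 0 < δ := hδ.1
    have hδ2 := hδ.2
    have h1 := h.fund_delta hδ0 hs hst ht hφ (fun τ hτ x hx => (hc τ hτ x hx).imp id
      fun h' => by linarith)
    have h2 : ∀ τ, |(∫ x in closedBall x₀ R, bigB δ m (U τ x) * φ x) -
        ∫ x in closedBall x₀ R, U τ x * φ x| ≤ (2 * δ) ^ (1 / m) * A := fun τ => by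
      refine abs_int_le ((hBc δ).comp (h.contx τ)) (h.contx τ) hφ.continuous fun x => ?_
      have h3 := bigB_bounds hm hδ0 (h.nonneg τ x)
      have h4 : 0 ≤ (2 * δ) ^ (1 / m) := by positivity
      rw [abs_le]; constructor <;> linarith
    have h5 : (∫ τ in s..t, ∫ x in closedBall x₀ R, betaC δ (U τ x ^ m) * spaceLap φ x) ≤
        Q + (t - s) * (2 * δ * A') := by
      have hQ1 : Continuous fun τ => ∫ x in closedBall x₀ R, U τ x ^ m * spaceLap φ x :=
        cont_par (U := fun τ x => (U τ x ^ m)) h.contP (continuous_spaceLap hφ)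
      have hQ2 : Continuous fun τ => ∫ x in closedBall x₀ R, betaC δ (U τ x ^ m) * spaceLap φ x :=
        cont_par (U := fun τ x => betaC δ (U τ x ^ m)) ((hb δ).comp h.contP)
          (continuous_spaceLap hφ)
      have e : Q + (t - s) * (2 * δ * A') = ∫ τ in s..t,
          ((∫ x in closedBall x₀ R, U τ x ^ m * spaceLap φ x) + 2 * δ * A') := by
        rw [intervalIntegral.integral_add (hQ1.intervalIntegrable _ _) (by simp)]
        simp [Q]
        ring
      rw [e]
      refine intervalIntegral.integral_mono_on hst (hQ2.intervalIntegrable _ _)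
        ((hQ1.add continuous_const).intervalIntegrable _ _) fun τ _ => ?_
      have h6 : |(∫ x in closedBall x₀ R, betaC δ (U τ x ^ m) * spaceLap φ x) -
        ∫ x in closedBall x₀ R, U τ x ^ m * spaceLap φ x| ≤ 2 * δ * A' := by
        refine abs_int_le ((hb δ).comp (h.contPx τ)) (h.contPx τ) (continuous_spaceLap hφ)
          fun x => ?_
        have h3 := betaC_bounds hδ0 (Real.rpow_nonneg (h.nonneg τ x) m)
        rw [abs_le]; constructor <;> linarith
      have := (abs_le.1 h6).2
      linarith
    have h7 := abs_le.1 (h2 t)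
    have h8 := abs_le.1 (h2 s)
    simp only [L]
    linarith [h7.1, h8.2]
  have hlim : Filter.Tendsto (fun δ : ℝ => Q + (2 * ((2 * δ) ^ (1 / m) * A) + (t - s) * (2 * δ * A')))
      (nhdsWithin (0:ℝ) (Ioi 0)) (nhds Q) := by
    have hcont : Continuous fun δ : ℝ =>
        Q + (2 * ((2 * δ) ^ (1 / m) * A) + (t - s) * (2 * δ * A')) := by
      have : Continuous fun δ : ℝ => (2 * δ) ^ (1 / m) :=
        (continuous_const.mul continuous_id).rpow_const fun _ => Or.inr (by positivity)
      fun_prop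
    have := (hcont.tendsto 0).mono_left (nhdsWithin_le_nhds (s := Ioi 0))
    simpa [Real.zero_rpow (inv_ne_zero hm.ne')] using this
  exact ge_of_tendsto hlim key

lemma antitone_ext {g : ℝ → ℝ} (hg : Continuous g) (hT : 0 < T)
    (h : ∀ s t, 0 < s → s ≤ t → t < T → g t ≤ g s) {s t : ℝ} (hs : 0 ≤ s) (hst : s ≤ t)
    (ht : t ≤ T) : g t ≤ g s := by
  rcases hst.eq_or_lt with rfl | hlt
  · exact le_rfl
  have l1 : Filter.Tendsto (fun e : ℝ => g (min t (T - e))) (nhdsWithin (0:ℝ) (Ioi 0))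
      (nhds (g t)) := by
    have hc : Continuous fun e : ℝ => g (min t (T - e)) := by fun_prop
    have := (hc.tendsto 0).mono_left (nhdsWithin_le_nhds (s := Ioi 0))
    simpa [min_eq_left ht] using this
  have l2 : Filter.Tendsto (fun e : ℝ => g (max s e)) (nhdsWithin (0:ℝ) (Ioi 0))
      (nhds (g s)) := by
    have hc : Continuous fun e : ℝ => g (max s e) := by fun_prop
    have := (hc.tendsto 0).mono_left (nhdsWithin_le_nhds (s := Ioi 0))
    simpa [max_eq_left hs] using this
  refine le_of_tendsto_of_tendsto l1 l2 ?_
  have ht0 : 0 < t := hs.trans_lt hlt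
  have hsT : 0 < T - s := by linarith
  filter_upwards [Ioo_mem_nhdsGT ht0, Ioo_mem_nhdsGT hsT,
    Ioo_mem_nhdsGT (show (0:ℝ) < T / 2 by positivity)] with e h1 h2 h3
  refine h _ _ (lt_max_of_lt_right h1.1) ?_ (min_lt_of_right_lt (by linarith [h1.1]))
  refine max_le (le_min hlt.le (by linarith [h2.2])) (le_min h1.2.le (by linarith [h3.2]))

lemma fund (h : NSol m x₀ R T U) {φ : EE d → ℝ} (hφ : ContDiff ℝ 2 φ)
    (hc : ∀ s t, 0 < s → s ≤ t → t < T →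
      ∃ δ₀ > 0, ∀ τ ∈ Icc s t, ∀ x ∈ ball x₀ R, 0 ≤ φ x ∨ δ₀ ≤ U τ x ^ m)
    {s t : ℝ} (hs : 0 ≤ s) (hst : s ≤ t) (ht : t ≤ T) :
    (∫ x in closedBall x₀ R, U t x * φ x) - (∫ x in closedBall x₀ R, U s x * φ x) ≤
      ∫ τ in s..t, ∫ x in closedBall x₀ R, U τ x ^ m * spaceLap φ x := by
  have hQ1 : Continuous fun τ => ∫ x in closedBall x₀ R, U τ x ^ m * spaceLap φ x :=
    cont_par (U := fun τ x => (U τ x ^ m)) h.contP (continuous_spaceLap hφ)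
  have hg : Continuous fun t => (∫ x in closedBall x₀ R, U t x * φ x) -
      ∫ τ in (0:ℝ)..t, ∫ x in closedBall x₀ R, U τ x ^ m * spaceLap φ x :=
    (cont_par h.cont hφ.continuous).sub
      (intervalIntegral.continuous_primitive (fun a b => hQ1.intervalIntegrable a b) 0)
  have e : ∀ s t, ∫ τ in s..t, ∫ x in closedBall x₀ R, U τ x ^ m * spaceLap φ x =
      (∫ τ in (0:ℝ)..t, ∫ x in closedBall x₀ R, U τ x ^ m * spaceLap φ x) -
      ∫ τ in (0:ℝ)..s, ∫ x in closedBall x₀ R, U τ x ^ m * spaceLap φ x := fun s t =>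
    (intervalIntegral.integral_interval_sub_left (hQ1.intervalIntegrable _ _)
      (hQ1.intervalIntegrable _ _)).symm
  have := antitone_ext hg h.T0 (fun s t hs hst ht => by
    obtain ⟨δ₀, h0, h1⟩ := hc s t hs hst ht
    have := h.fund_open hs hst ht hφ h0 h1
    rw [e] at this
    linarith) hs hst ht
  rw [e]
  linarith

lemma fund_nonneg (h : NSol m x₀ R T U) {φ : EE d → ℝ} (hφ : ContDiff ℝ 2 φ)
    (hc : ∀ x, 0 ≤ φ x) {s t : ℝ} (hs : 0 ≤ s) (hst : s ≤ t) (ht : t ≤ T) :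
    (∫ x in closedBall x₀ R, U t x * φ x) - (∫ x in closedBall x₀ R, U s x * φ x) ≤
      ∫ τ in s..t, ∫ x in closedBall x₀ R, U τ x ^ m * spaceLap φ x :=
  h.fund hφ (fun _ _ _ _ _ => ⟨1, one_pos, fun _ _ x _ => Or.inl (hc x)⟩) hs hst ht

lemma mass_le (h : NSol m x₀ R T U) {s : ℝ} (hs : 0 ≤ s) (ht : s ≤ T) :
    (∫ x in closedBall x₀ R, U s x) ≤ ∫ x in closedBall x₀ R, U 0 x := by
  have := h.fund_nonneg (φ := fun _ => 1) contDiff_const (fun _ => zero_le_one) le_rfl hs ht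
  simpa [spaceLap] using this

lemma fund_neg (h : NSol m x₀ R T U) {φ : EE d → ℝ} (hφ : ContDiff ℝ 2 φ)
    {K : Set (EE d)} (hK : IsCompact K) (hKb : K ⊆ ball x₀ R) (hz : ∀ x, x ∉ K → φ x = 0)
    {s t : ℝ} (hs : 0 ≤ s) (hst : s ≤ t) (ht : t ≤ T) :
    (∫ x in closedBall x₀ R, U t x * φ x) - (∫ x in closedBall x₀ R, U s x * φ x) ≤
      ∫ τ in s..t, ∫ x in closedBall x₀ R, U τ x ^ m * spaceLap φ x := by
  refine h.fund hφ (fun s t hs hst ht => ?_) hs hst ht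
  rcases K.eq_empty_or_nonempty with rfl | hne
  · exact ⟨1, one_pos, fun _ _ x _ => Or.inl (hz x (by simp)).ge⟩
  obtain ⟨p, hp, hmin⟩ := (isCompact_Icc.prod hK).exists_isMinOn
    ((nonempty_Icc.2 hst).prod hne) (h.contP.continuousOn (s := Icc s t ×ˢ K))
  refine ⟨U p.1 p.2 ^ m, Real.rpow_pos_of_pos (h.pos _ ⟨hs.trans_le hp.1.1, hp.1.2.trans_lt ht⟩ _
    (hKb hp.2)) _, fun τ hτ x _ => ?_⟩
  by_cases hx : x ∈ K
  · exact Or.inr (hmin (show (τ, x) ∈ Icc s t ×ˢ K from ⟨hτ, hx⟩))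
  · exact Or.inl (hz x hx).ge

end NSol

lemma spaceLap_scale {d : ℕ} {g : EE d → ℝ} (hg : ContDiff ℝ 2 g) (r : ℝ) (x₀ x : EE d) :
    spaceLap (fun y => g (r • (y - x₀))) x = r ^ 2 * spaceLap g (r • (x - x₀)) := by
  have key : ∀ f : EE d → ℝ, Differentiable ℝ f → ∀ y v,
      fderiv ℝ (fun y => f (r • (y - x₀))) y v = r * fderiv ℝ f (r • (y - x₀)) v := by
    intro f hf y v
    have h1 : HasFDerivAt (fun y : EE d => r • (y - x₀)) (r • ContinuousLinearMap.id ℝ (EE d)) y :=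
      ((hasFDerivAt_id y).sub_const x₀).const_smul r
    have h2 := ((hf (r • (y - x₀))).hasFDerivAt.comp y h1).fderiv
    have h3 : fderiv ℝ (fun y => f (r • (y - x₀))) y = _ := h2
    rw [h3]; simp
  unfold spaceLap
  rw [Finset.mul_sum]
  refine Finset.sum_congr rfl fun i _ => ?_
  have hg1 : ContDiff ℝ 1 (fun y => fderiv ℝ g y (EuclideanSpace.single i 1)) :=
    contDiff_pd (n := 1) (by norm_num; exact hg) _
  simp_rw [key g (hg.differentiable (by norm_num))]
  rw [fderiv_const_mul]
  · rw [smul_apply, key _ (hg1.differentiable (by norm_num))]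
    simp; ring
  · have : Differentiable ℝ (fun y => fderiv ℝ g y (EuclideanSpace.single i 1)) :=
      hg1.differentiable (by norm_num)
    exact (this _).comp x (by fun_prop)

lemma spaceLap_neg' {d : ℕ} (f : EE d → ℝ) (x : EE d) :
    spaceLap (fun y => - f y) x = - spaceLap f x := by
  unfold spaceLap
  rw [← Finset.sum_neg_distrib]
  refine Finset.sum_congr rfl fun i _ => ?_
  have : (fun y => fderiv ℝ (fun y => - f y) y (EuclideanSpace.single i 1)) =
      fun y => - (fderiv ℝ f y (EuclideanSpace.single i 1)) := by
    funext y
    rw [fderiv_fun_neg]; simp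
  rw [this, fderiv_fun_neg]; simp

lemma exists_test {d : ℕ} {m : ℝ} (hm : 0 < m) (hm1 : m < 1) :
    ∃ φ : EE d → ℝ, ∃ C : ℝ, 0 < C ∧ ContDiff ℝ 2 φ ∧ (∀ x, 0 ≤ φ x) ∧
      (∀ x ∈ closedBall (0 : EE d) (1/3), φ x = 1) ∧
      (∀ x, x ∉ closedBall (0 : EE d) (1/2) → φ x = 0) ∧
      ∀ x, |spaceLap φ x| ≤ C * φ x ^ m := by
  let ψ : ContDiffBump (0 : EE d) := ⟨1/3, 1/2, by norm_num, by norm_num⟩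
  have hψ : ContDiff ℝ 2 ψ := ψ.contDiff
  obtain ⟨k, hk⟩ := exists_nat_ge (2 / (1 - m))
  have h1m : 0 < 1 - m := by linarith
  have hk2 : 2 ≤ k * (1 - m) := (div_le_iff₀ h1m).1 hk
  have hk3 : 3 ≤ k := by
    by_contra hcon
    have : (k : ℝ) ≤ 2 := by exact_mod_cast (by omega : k ≤ 2)
    nlinarith
  have hz : ∀ x, x ∉ closedBall (0 : EE d) (1/2) → ψ x = 0 := by
    intro x hx
    apply ψ.zero_of_le_dist
    simp only [mem_closedBall, not_le] at hx
    exact hx.le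
  have hS : Continuous fun x => ∑ i : Fin d, (fderiv ℝ ψ x (EuclideanSpace.single i 1)) ^ 2 := by
    refine continuous_finsetSum _ fun i _ => ?_
    exact (contDiff_pd (n := 1) (by norm_num; exact hψ) _).continuous.pow 2
  obtain ⟨A, hA⟩ := (isCompact_closedBall (0 : EE d) (1/2)).exists_bound_of_continuousOn
    hS.continuousOn
  obtain ⟨A', hA'⟩ := (isCompact_closedBall (0 : EE d) (1/2)).exists_bound_of_continuousOn
    (continuous_spaceLap hψ).continuousOn
  refine ⟨fun x => ψ x ^ k, k * k * |A| + k * |A'| + 1, by positivity, hψ.pow k,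
    fun x => pow_nonneg ψ.nonneg _, ?_, ?_, ?_⟩
  · intro x hx
    have : ψ x = 1 := ψ.one_of_mem_closedBall hx
    simp [this]
  · intro x hx
    have : k ≠ 0 := by omega
    simp [hz x hx, this]
  · intro x
    have hp0 : 0 ≤ ψ x := ψ.nonneg
    have hp1 : ψ x ≤ 1 := ψ.le_one
    have hpow0 : 0 ≤ (ψ x ^ k) ^ m := by positivity
    by_cases hx : x ∈ closedBall (0 : EE d) (1/2)
    · have e := spaceLap_comp (f := ψ) (x := x) (h := fun y => y ^ k)
        (h' := fun y => k * y ^ (k - 1)) (h2 := k * (((k - 1 : ℕ) : ℝ) * (ψ x) ^ (k - 1 - 1)))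
        hψ.contDiffAt (Filter.Eventually.of_forall fun y => hasDerivAt_pow k y)
        ((hasDerivAt_pow (k - 1) (ψ x)).const_mul _)
      rw [e]
      have hbase : ψ x ^ (k - 2) ≤ (ψ x ^ k) ^ m := by
        rcases hp0.eq_or_lt with h0 | h0
        · rw [← h0, zero_pow (by omega)]; positivity
        · rw [← Real.rpow_natCast, ← Real.rpow_natCast, ← Real.rpow_mul hp0]
          apply Real.rpow_le_rpow_of_exponent_ge h0 hp1
          rw [Nat.cast_sub (by omega)]
          push_cast
          linarith
      have hbase2 : ψ x ^ (k - 1) ≤ ψ x ^ (k - 2) := pow_le_pow_of_le_one hp0 hp1 (by omega)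
      have b1 := (hA x hx).trans (le_abs_self A)
      have b2 := (hA' x hx).trans (le_abs_self A')
      rw [Real.norm_eq_abs] at b1 b2
      have hkk : ((k - 1 : ℕ) : ℝ) ≤ k := by exact_mod_cast Nat.sub_le k 1
      have hq0 : 0 ≤ ψ x ^ (k - 2) := by positivity
      refine (abs_add_le _ _).trans ?_
      rw [abs_mul ((k:ℝ) * (((k - 1 : ℕ) : ℝ) * (ψ x) ^ (k - 1 - 1))) _, abs_mul ((k:ℝ) * ψ x ^ (k - 1)) _, abs_of_nonneg (a := (k:ℝ) * (((k - 1 : ℕ) : ℝ) * (ψ x) ^ (k - 1 - 1)))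
        (by positivity), abs_of_nonneg (a := (k:ℝ) * ψ x ^ (k - 1)) (by positivity),
        show k - 1 - 1 = k - 2 by omega]
      calc _ ≤ (k * (k * (ψ x ^ k) ^ m)) * |A| + (k * (ψ x ^ k) ^ m) * |A'| := by
            gcongr
            exact hbase2.trans hbase
        _ ≤ _ := by nlinarith
    · have e : (fun y => ψ y ^ k) =ᶠ[nhds x] fun _ => 0 := by
        filter_upwards [isClosed_closedBall.isOpen_compl.mem_nhds hx] with y hy
        rw [hz y hy, zero_pow (by omega)]
      rw [spaceLap_eventuallyEq e]
      simp only [spaceLap, fderiv_fun_const, Pi.zero_apply, zero_apply, Finset.sum_const_zero, abs_zero]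
      positivity

lemma rpow_young {v k m : ℝ} (hv : 0 ≤ v) (hk : 0 < k) (hm : 0 < m) (hm1 : m < 1) :
    v ^ m ≤ k ^ m + k ^ (m - 1) * v := by
  rcases le_total v k with h | h
  · have := Real.rpow_le_rpow hv h hm.le
    have : 0 ≤ k ^ (m - 1) * v := by positivity
    linarith
  · have hv0 : 0 < v := hk.trans_le h
    have h1 : v ^ (m - 1) ≤ k ^ (m - 1) :=
      Real.rpow_le_rpow_of_nonpos hk h (by linarith)
    have h2 : v ^ m = v ^ (m - 1) * v := by
      rw [← Real.rpow_add_one hv0.ne']; ring_nf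
    have h3 : 0 ≤ k ^ m := by positivity
    rw [h2]
    nlinarith

namespace NSol

variable {d : ℕ} {m : ℝ} {x₀ : EE d} {R T : ℝ} {U : ℝ → EE d → ℝ}

lemma lower_bd (h : NSol m x₀ R T U) (hm1 : m < 1) {φ : EE d → ℝ} {C : ℝ} (hC : 0 < C)
    (hφ : ContDiff ℝ 2 φ) (hφ0 : ∀ x, 0 ≤ φ x)
    (hφ1 : ∀ x ∈ closedBall (0 : EE d) (1/3), φ x = 1)
    (hφz : ∀ x, x ∉ closedBall (0 : EE d) (1/2) → φ x = 0)
    (hφL : ∀ x, |spaceLap φ x| ≤ C * φ x ^ m) :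
    (∫ x in ball x₀ (R / 3), U 0 x) ^ (1 - m) ≤
      2 * C * T * (R⁻¹) ^ 2 * (volume.real (closedBall x₀ R)) ^ (1 - m) := by
  have hR := h.R0
  have hT := h.T0
  have hm := h.m0
  have hKc : IsCompact (closedBall x₀ R) := isCompact_closedBall _ _
  set V := volume.real (closedBall x₀ R) with hV
  have hVpos : 0 < V := by
    rw [hV, Measure.real, ENNReal.toReal_pos_iff]
    exact ⟨measure_closedBall_pos _ _ hR, hKc.measure_lt_top⟩
  set Φ : EE d → ℝ := fun x => φ (R⁻¹ • (x - x₀)) with hΦ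
  have hΦ2 : ContDiff ℝ 2 Φ := hφ.comp (by fun_prop)
  have hΦ0 : ∀ x, 0 ≤ Φ x := fun x => hφ0 _
  have hnorm : ∀ x, ‖R⁻¹ • (x - x₀)‖ = dist x x₀ / R := by
    intro x
    rw [norm_smul, dist_eq_norm, Real.norm_eq_abs, abs_of_pos (inv_pos.2 hR)]
    field_simp
  have hΦ1 : ∀ x ∈ ball x₀ (R / 3), Φ x = 1 := by
    intro x hx
    apply hφ1
    rw [mem_closedBall_zero_iff, hnorm, div_le_iff₀ hR]
    rw [mem_ball] at hx
    linarith
  have hΦz : ∀ x, x ∉ closedBall x₀ (R / 2) → Φ x = 0 := by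
    intro x hx
    apply hφz
    rw [mem_closedBall_zero_iff, hnorm, div_le_iff₀ hR]
    rw [mem_closedBall] at hx
    linarith
  set z : ℝ → ℝ := fun τ => ∫ x in closedBall x₀ R, U τ x * Φ x with hz
  have hzc : Continuous z := cont_par h.cont hΦ2.continuous
  have iU : ∀ τ, IntegrableOn (fun x => U τ x * Φ x) (closedBall x₀ R) := fun τ =>
    ((h.contx τ).mul hΦ2.continuous).continuousOn.integrableOn_compact hKc
  obtain ⟨s, hs, hmax⟩ := isCompact_Icc.exists_isMaxOn (nonempty_Icc.2 hT.le) hzc.continuousOn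
  have hb : (∫ x in ball x₀ (R / 3), U 0 x) ≤ z 0 := by
    have e : (∫ x in ball x₀ (R / 3), U 0 x) = ∫ x in ball x₀ (R / 3), U 0 x * Φ x :=
      setIntegral_congr_fun measurableSet_ball fun x hx => by simp [hΦ1 x hx]
    rw [e]
    refine setIntegral_mono_set (iU 0) ?_ ?_
    · exact Filter.Eventually.of_forall fun x => mul_nonneg (h.nonneg 0 x) (hΦ0 x)
    · exact (ball_subset_closedBall.trans (closedBall_subset_closedBall (by linarith))).eventuallyLE
  have hb0 : 0 ≤ ∫ x in ball x₀ (R / 3), U 0 x :=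
    integral_nonneg fun x => h.nonneg 0 x
  have hzs : z 0 ≤ z s := hmax (left_mem_Icc.2 hT.le)
  rcases le_or_gt (z s) 0 with hneg | hpos
  · have : (∫ x in ball x₀ (R / 3), U 0 x) = 0 := by linarith
    rw [this, Real.zero_rpow (by linarith)]
    positivity
  have F := h.fund_neg (φ := fun x => - Φ x) hΦ2.neg (isCompact_closedBall x₀ (R / 2))
    (closedBall_subset_ball (by linarith)) (fun x hx => by simp [hΦz x hx]) hs.1 hs.2 le_rfl
  have e1 : (∫ x in closedBall x₀ R, U T x * - Φ x) = 0 := by simp [h.ext]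
  have e2 : (∫ x in closedBall x₀ R, U s x * - Φ x) = - z s := by
    simp only [mul_neg, integral_neg, hz]
  rw [e1, e2] at F
  set k := z s / V with hk
  have hkpos : 0 < k := div_pos hpos hVpos
  have hpt : ∀ τ x, U τ x ^ m * spaceLap (fun x => - Φ x) x ≤
      C * (R⁻¹) ^ 2 * (k ^ m + k ^ (m - 1) * (U τ x * Φ x)) := by
    intro τ x
    have hu := h.nonneg τ x
    have y := rpow_young (mul_nonneg hu (hΦ0 x)) hkpos hm hm1
    rw [Real.mul_rpow hu (hΦ0 x)] at y
    rw [spaceLap_neg', hΦ, spaceLap_scale hφ]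
    have a := hφL (R⁻¹ • (x - x₀))
    have a2 := neg_abs_le (spaceLap φ (R⁻¹ • (x - x₀)))
    calc U τ x ^ m * -((R⁻¹) ^ 2 * spaceLap φ (R⁻¹ • (x - x₀)))
        = (R⁻¹) ^ 2 * (U τ x ^ m * -spaceLap φ (R⁻¹ • (x - x₀))) := by ring
      _ ≤ (R⁻¹) ^ 2 * (U τ x ^ m * (C * φ (R⁻¹ • (x - x₀)) ^ m)) := by
          gcongr; linarith
      _ = C * (R⁻¹) ^ 2 * (U τ x ^ m * φ (R⁻¹ • (x - x₀)) ^ m) := by ring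
      _ ≤ _ := by gcongr
  have hin : ∀ τ ∈ Icc s T, (∫ x in closedBall x₀ R, U τ x ^ m * spaceLap (fun x => - Φ x) x) ≤
      2 * C * (R⁻¹) ^ 2 * (V ^ (1 - m) * z s ^ m) := by
    intro τ hτ
    have hsl := continuous_spaceLap hΦ2.neg
    calc _ ≤ ∫ x in closedBall x₀ R, C * (R⁻¹) ^ 2 * (k ^ m + k ^ (m - 1) * (U τ x * Φ x)) := by
          refine integral_mono ?_ ?_ (fun x => hpt τ x)
          · exact ((h.contPx τ).mul hsl).continuousOn.integrableOn_compact hKc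
          · exact ContinuousOn.integrableOn_compact hKc (Continuous.continuousOn
              (continuous_const.mul (continuous_const.add
                (continuous_const.mul ((h.contx τ).mul hΦ2.continuous)))))
      _ = C * (R⁻¹) ^ 2 * (V * k ^ m + k ^ (m - 1) * z τ) := by
          have ic : Integrable (fun _ : EE d => k ^ m) (volume.restrict (closedBall x₀ R)) :=
            continuous_const.continuousOn.integrableOn_compact hKc
          rw [integral_const_mul, integral_add ic
            ((iU τ).const_mul _), integral_const_mul, setIntegral_const]
          rfl
      _ ≤ C * (R⁻¹) ^ 2 * (V * k ^ m + k ^ (m - 1) * z s) := by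
          have : z τ ≤ z s := hmax ⟨hs.1.trans hτ.1, hτ.2⟩
          gcongr
      _ = _ := by
          have a1 : V * k ^ m = V ^ (1 - m) * z s ^ m := by
            rw [hk, Real.div_rpow hpos.le hVpos.le, Real.rpow_sub hVpos, Real.rpow_one]
            field_simp
          have a2 : k ^ (m - 1) * z s = V * k ^ m := by
            rw [Real.rpow_sub_one hkpos.ne', hk]
            field_simp
          rw [a2, a1]; ring
  have hI : (∫ τ in s..T, ∫ x in closedBall x₀ R, U τ x ^ m * spaceLap (fun x => - Φ x) x) ≤
      ∫ τ in s..T, 2 * C * (R⁻¹) ^ 2 * (V ^ (1 - m) * z s ^ m) := by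
    refine intervalIntegral.integral_mono_on hs.2 ?_ (by simp) hin
    exact Continuous.intervalIntegrable (cont_par (U := fun t x => U t x ^ m) h.contP
      (continuous_spaceLap hΦ2.neg)) _ _
  rw [intervalIntegral.integral_const, smul_eq_mul] at hI
  have hfin : z s ≤ T * (2 * C * (R⁻¹) ^ 2 * (V ^ (1 - m) * z s ^ m)) := by
    have : (T - s) * (2 * C * (R⁻¹) ^ 2 * (V ^ (1 - m) * z s ^ m)) ≤
        T * (2 * C * (R⁻¹) ^ 2 * (V ^ (1 - m) * z s ^ m)) := by
      gcongr
      linarith [hs.1]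
    linarith
  have h1 : z s ^ (1 - m) ≤ 2 * C * T * (R⁻¹) ^ 2 * V ^ (1 - m) := by
    rw [Real.rpow_sub hpos, Real.rpow_one, div_le_iff₀ (by positivity)]
    calc _ ≤ _ := hfin
      _ = _ := by ring
  exact (Real.rpow_le_rpow hb0 (hb.trans hzs) (by linarith)).trans h1

end NSol

noncomputable def ker (d : ℕ) (ε : ℝ) (z : EE d) : ℝ := (ε ^ 2 + ‖z‖ ^ 2) ^ (-((d - 2 : ℝ) / 2))

noncomputable def cK (d : ℕ) : ℝ :=
  2 * d * ((d - 2 : ℝ) / 2) * 2 ^ (-((d - 2 : ℝ) / 2) - 2) * volume.real (ball (0 : EE d) 1)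

lemma omega_pos (d : ℕ) : 0 < volume.real (ball (0 : EE d) 1) := by
  rw [Measure.real, ENNReal.toReal_pos_iff]
  exact ⟨measure_ball_pos _ _ one_pos, measure_ball_lt_top⟩

lemma real_ball {d : ℕ} {r : ℝ} (hr : 0 < r) (x : EE d) :
    volume.real (ball x r) = r ^ d * volume.real (ball (0 : EE d) 1) := by
  have := Measure.addHaar_ball_of_pos (volume : Measure (EE d)) x hr
  rw [finrank_euclideanSpace_fin] at this
  rw [Measure.real, this, ENNReal.toReal_mul, ENNReal.toReal_ofReal (by positivity)]
  rfl

lemma cK_pos {d : ℕ} (hd : 3 ≤ d) : 0 < cK d := by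
  have h3 : (3 : ℝ) ≤ d := by exact_mod_cast hd
  have := omega_pos d
  have : 0 < ((d - 2 : ℝ) / 2) := by linarith
  unfold cK
  positivity

section ker
variable {d : ℕ} {ε : ℝ}

lemma ker_base (hε : 0 < ε) (z : EE d) : 0 < ε ^ 2 + ‖z‖ ^ 2 := by positivity

lemma ker_nonneg (ε : ℝ) (z : EE d) : 0 ≤ ker d ε z := by unfold ker; positivity

lemma ker_symm (x y : EE d) : ker d ε (x - y) = ker d ε (y - x) := by
  unfold ker; rw [norm_sub_rev]

lemma ker_contDiff (hε : 0 < ε) : ContDiff ℝ 2 (ker d ε) := by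
  unfold ker
  exact (contDiff_const.add (contDiff_norm_sq ℝ)).rpow_const_of_ne
    fun z => (ker_base hε z).ne'

lemma ker_cont (hε : 0 < ε) : Continuous (ker d ε) := (ker_contDiff hε).continuous

lemma ker_le (hd : 3 ≤ d) {r : ℝ} (hr : 0 < r) {z : EE d} (hz : r ≤ ‖z‖) :
    ker d ε z ≤ r ^ (2 - d : ℝ) := by
  have h3 : (3 : ℝ) ≤ d := by exact_mod_cast hd
  have e : r ^ (2 - d : ℝ) = (r ^ 2) ^ (-((d - 2 : ℝ) / 2)) := by
    rw [← Real.rpow_natCast, ← Real.rpow_mul hr.le]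
    congr 1; push_cast; ring
  rw [e]
  unfold ker
  apply Real.rpow_le_rpow_of_nonpos (by positivity) _ (by linarith)
  have : r ^ 2 ≤ ‖z‖ ^ 2 := by gcongr
  nlinarith [sq_nonneg ε]

lemma ker_lap (hε : 0 < ε) (z : EE d) :
    spaceLap (ker d ε) z = -(2 * d * ((d - 2 : ℝ) / 2) * ε ^ 2 *
      (ε ^ 2 + ‖z‖ ^ 2) ^ (-((d - 2 : ℝ) / 2) - 2)) := by
  set k := ((d - 2 : ℝ) / 2) with hk
  have hf : ContDiff ℝ 2 (fun z : EE d => ε ^ 2 + ‖z‖ ^ 2) := contDiff_const.add (contDiff_norm_sq ℝ)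
  have fd : ∀ (z : EE d) (i : Fin d), fderiv ℝ (fun z : EE d => ε ^ 2 + ‖z‖ ^ 2) z
      (EuclideanSpace.single i 1) = 2 * z i := by
    intro z i
    rw [fderiv_const_add, fderiv_norm_sq_apply]
    simp [EuclideanSpace.inner_single_right]
  have fl : ∀ z : EE d, spaceLap (fun z : EE d => ε ^ 2 + ‖z‖ ^ 2) z = 2 * d := by
    intro z
    unfold spaceLap
    simp_rw [fd]
    have : ∀ i : Fin d, fderiv ℝ (fun y : EE d => 2 * y i) z (EuclideanSpace.single i 1) = 2 := by
      intro i
      have h1 : HasFDerivAt (fun y : EE d => 2 * y i)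
          ((2 : ℝ) • (EuclideanSpace.proj i : EE d →L[ℝ] ℝ)) z :=
        ((2 : ℝ) • (EuclideanSpace.proj i : EE d →L[ℝ] ℝ)).hasFDerivAt
      rw [h1.fderiv]
      simp
    simp_rw [this]
    simp [mul_comm]
  have hb := ker_base hε z
  have e := spaceLap_comp (f := fun z : EE d => ε ^ 2 + ‖z‖ ^ 2) (x := z) (h := fun r => r ^ (-k))
    (h' := fun r => (-k) * r ^ (-k - 1))
    (h2 := (-k) * ((-k - 1) * (ε ^ 2 + ‖z‖ ^ 2) ^ (-k - 1 - 1))) hf.contDiffAt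
    (by
      filter_upwards [lt_mem_nhds hb] with r hr
      exact Real.hasDerivAt_rpow_const (Or.inl hr.ne'))
    ((Real.hasDerivAt_rpow_const (Or.inl hb.ne')).const_mul _)
  have e' : spaceLap (ker d ε) z = _ := e
  rw [e', fl]
  simp_rw [fd]
  have hn : ∑ i, (2 * z i) ^ 2 = 4 * ‖z‖ ^ 2 := by
    rw [EuclideanSpace.norm_sq_eq, Finset.mul_sum]
    refine Finset.sum_congr rfl fun i _ => ?_
    rw [Real.norm_eq_abs, sq_abs]; ring
  rw [hn]
  have hr1 : (ε ^ 2 + ‖z‖ ^ 2) ^ (-k - 1) = (ε ^ 2 + ‖z‖ ^ 2) ^ (-k - 2) * (ε ^ 2 + ‖z‖ ^ 2) := by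
    rw [← Real.rpow_add_one hb.ne']; ring_nf
  rw [hr1, show -k - 1 - 1 = -k - 2 by ring]
  have hdk : (d : ℝ) = 2 * k + 2 := by rw [hk]; ring
  rw [hdk]
  ring

lemma ker_lap_nonpos (hd : 3 ≤ d) (hε : 0 < ε) (z : EE d) : spaceLap (ker d ε) z ≤ 0 := by
  have h3 : (3 : ℝ) ≤ d := by exact_mod_cast hd
  have : 0 < ((d - 2 : ℝ) / 2) := by linarith
  rw [ker_lap hε]
  have hb := ker_base hε z
  have : 0 ≤ 2 * d * ((d - 2 : ℝ) / 2) * ε ^ 2 *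
      (ε ^ 2 + ‖z‖ ^ 2) ^ (-((d - 2 : ℝ) / 2) - 2) := by positivity
  linarith

lemma ker_lap_le (hd : 3 ≤ d) (hε : 0 < ε) {z : EE d} (hz : ‖z‖ ≤ ε) :
    spaceLap (ker d ε) z * volume.real (ball (0 : EE d) ε) ≤ - cK d := by
  have h3 : (3 : ℝ) ≤ d := by exact_mod_cast hd
  have hk : 0 < ((d - 2 : ℝ) / 2) := by linarith
  have hω := omega_pos d
  rw [ker_lap hε, real_ball hε, cK]
  set k := ((d - 2 : ℝ) / 2) with hkd
  have h1 : (2 * ε ^ 2) ^ (-k - 2) ≤ (ε ^ 2 + ‖z‖ ^ 2) ^ (-k - 2) := by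
    apply Real.rpow_le_rpow_of_nonpos (ker_base hε z) _ (by linarith)
    have : ‖z‖ ^ 2 ≤ ε ^ 2 := by gcongr
    linarith
  have h2 : (2 * ε ^ 2) ^ (-k - 2) * (ε ^ 2 * ε ^ d) = 2 ^ (-k - 2) := by
    rw [Real.mul_rpow (by norm_num) (by positivity), ← Real.rpow_natCast ε 2, ← Real.rpow_natCast ε d,
      ← Real.rpow_mul hε.le, mul_assoc, ← Real.rpow_add hε, ← Real.rpow_add hε]
    have : ((2 : ℕ) : ℝ) * (-k - 2) + (((2 : ℕ) : ℝ) + d) = 0 := by rw [hkd]; push_cast; ring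
    rw [this]; simp
  rw [← h2]
  have := mul_le_mul_of_nonneg_left h1
    (show 0 ≤ 2 * d * k * (ε ^ 2 * ε ^ d) * volume.real (ball (0 : EE d) 1) by positivity)
  linarith

end ker

namespace NSol

variable {d : ℕ} {m : ℝ} {x₀ : EE d} {R T : ℝ} {U : ℝ → EE d → ℝ}

lemma pot_decr (h : NSol m x₀ R T U) (hd : 3 ≤ d) {ε η s t : ℝ} (hε : 0 < ε) (hs : 0 ≤ s)
    (hst : s ≤ t) (ht : t ≤ T) (y : EE d)
    (H : ∀ τ ∈ Icc s t, ∀ x ∈ ball y ε, U s y ^ m - η ≤ U τ x ^ m) :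
    (∫ x in closedBall x₀ R, U t x * ker d ε (x - y))
      - (∫ x in closedBall x₀ R, U s x * ker d ε (x - y)) ≤
      - (cK d * (t - s) * (U s y ^ m - η)) := by
  have hKc : IsCompact (closedBall x₀ R) := isCompact_closedBall _ _
  have hφ : ContDiff ℝ 2 (fun x => ker d ε (x - y)) :=
    (ker_contDiff hε).comp (contDiff_id.sub contDiff_const)
  have hlap : ∀ x, spaceLap (fun x => ker d ε (x - y)) x = spaceLap (ker d ε) (x - y) := by
    intro x
    have := spaceLap_scale (ker_contDiff (d := d) hε) 1 y x
    simpa using this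
  have F := h.fund_nonneg hφ (fun x => ker_nonneg _ _) hs hst ht
  refine F.trans ?_
  have hsl := continuous_spaceLap hφ
  have hc := cK_pos hd
  have hin : ∀ τ ∈ Icc s t, (∫ x in closedBall x₀ R,
      U τ x ^ m * spaceLap (fun x => ker d ε (x - y)) x) ≤ - (cK d * (U s y ^ m - η)) := by
    intro τ hτ
    have hneg : ∀ x, U τ x ^ m * spaceLap (fun x => ker d ε (x - y)) x ≤ 0 := by
      intro x
      rw [hlap]
      exact mul_nonpos_of_nonneg_of_nonpos (Real.rpow_nonneg (h.nonneg _ _) _)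
        (ker_lap_nonpos hd hε _)
    rcases le_or_gt (U s y ^ m - η) 0 with ha | ha
    · have := integral_nonpos (μ := volume.restrict (closedBall x₀ R)) hneg
      nlinarith
    · have hsub : ball y ε ⊆ closedBall x₀ R := by
        intro x hx
        by_contra hcon
        have := H τ hτ x hx
        rw [h.zeroP τ (fun h' => hcon (ball_subset_closedBall h'))] at this
        linarith
      have ii : IntegrableOn (fun x => U τ x ^ m * spaceLap (fun x => ker d ε (x - y)) x)
        (closedBall x₀ R) := ((h.contPx τ).mul hsl).continuousOn.integrableOn_compact hKc
      have s1 : (∫ x in closedBall x₀ R, U τ x ^ m * spaceLap (fun x => ker d ε (x - y)) x) ≤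
          ∫ x in ball y ε, U τ x ^ m * spaceLap (fun x => ker d ε (x - y)) x := by
        have := setIntegral_mono_set (ii.neg)
          (Filter.Eventually.of_forall fun x => by simpa using hneg x) hsub.eventuallyLE
        simp only [Pi.neg_apply, integral_neg] at this
        linarith
      refine s1.trans ?_
      have hV : volume.real (ball y ε) = volume.real (ball (0 : EE d) ε) := by
        rw [Measure.addHaar_real_ball_center]
      have hVp : 0 < volume.real (ball (0 : EE d) ε) := by
        rw [Measure.real, ENNReal.toReal_pos_iff]
        exact ⟨measure_ball_pos _ _ hε, measure_ball_lt_top⟩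
      calc _ ≤ ∫ x in ball y ε, (U s y ^ m - η) * (- cK d / volume.real (ball (0 : EE d) ε)) := by
            refine setIntegral_mono_on (ii.mono_set hsub)
              (integrableOn_const measure_ball_lt_top.ne) measurableSet_ball ?_
            intro x hx
            have k1 := H τ hτ x hx
            rw [hlap]
            have k2 : spaceLap (ker d ε) (x - y) ≤ - cK d / volume.real (ball (0 : EE d) ε) := by
              rw [le_div_iff₀ hVp]
              apply ker_lap_le hd hε
              rw [mem_ball, dist_eq_norm] at hx
              exact hx.le
            have k3 : - cK d / volume.real (ball (0 : EE d) ε) ≤ 0 :=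
              div_nonpos_of_nonpos_of_nonneg (by linarith) hVp.le
            calc _ ≤ U τ x ^ m * (- cK d / volume.real (ball (0 : EE d) ε)) := by
                  have := Real.rpow_nonneg (h.nonneg τ x) m
                  gcongr
              _ ≤ _ := mul_le_mul_of_nonpos_right k1 k3
        _ = _ := by
            rw [setIntegral_const, hV, smul_eq_mul]
            field_simp
  have hI : (∫ τ in s..t, ∫ x in closedBall x₀ R,
      U τ x ^ m * spaceLap (fun x => ker d ε (x - y)) x) ≤
      ∫ τ in s..t, - (cK d * (U s y ^ m - η)) := by
    refine intervalIntegral.integral_mono_on hst ?_ (by simp) hin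
    exact Continuous.intervalIntegrable (cont_par (U := fun t x => U t x ^ m) h.contP hsl) _ _
  rw [intervalIntegral.integral_const, smul_eq_mul] at hI
  linarith

end NSol

namespace NSol

variable {d : ℕ} {m : ℝ} {x₀ : EE d} {R T : ℝ} {U : ℝ → EE d → ℝ}

noncomputable def YY (m : ℝ) (x₀ : EE d) (R : ℝ) (U : ℝ → EE d → ℝ) (t : ℝ) : ℝ :=
  ∫ x in closedBall x₀ R, U t x * U t x ^ m

noncomputable def MM (x₀ : EE d) (R : ℝ) (U : ℝ → EE d → ℝ) (t : ℝ) : ℝ :=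
  ∫ x in closedBall x₀ R, U t x

noncomputable def PP (x₀ : EE d) (R : ℝ) (U : ℝ → EE d → ℝ) (ε t : ℝ) (y : EE d) : ℝ :=
  ∫ x in closedBall x₀ R, U t x * ker d ε (x - y)

noncomputable def XX (x₀ : EE d) (R : ℝ) (U : ℝ → EE d → ℝ) (ε t : ℝ) : ℝ :=
  ∫ y in closedBall x₀ R, U t y * PP x₀ R U ε t y

lemma YY_cont (h : NSol m x₀ R T U) : Continuous (YY m x₀ R U) :=
  continuous_parametric_integral_of_continuous (f := fun t x => U t x * U t x ^ m)
    (h.cont.mul h.contP) (isCompact_closedBall _ _)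

lemma MM_cont (h : NSol m x₀ R T U) : Continuous (MM x₀ R U) :=
  continuous_parametric_integral_of_continuous (f := fun t x => U t x)
    h.cont (isCompact_closedBall _ _)

lemma PP_cont (h : NSol m x₀ R T U) {ε : ℝ} (hε : 0 < ε) :
    Continuous (fun p : ℝ × EE d => PP x₀ R U ε p.1 p.2) := by
  refine continuous_parametric_integral_of_continuous
    (f := fun (p : ℝ × EE d) x => U p.1 x * ker d ε (x - p.2)) ?_ (isCompact_closedBall _ _)
  have h1 : Continuous fun q : (ℝ × EE d) × EE d => U q.1.1 q.2 :=
    h.cont.comp (f := fun q : (ℝ × EE d) × EE d => (q.1.1, q.2)) (by fun_prop)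
  have h2 : Continuous fun q : (ℝ × EE d) × EE d => ker d ε (q.2 - q.1.2) :=
    (ker_cont hε).comp (by fun_prop)
  exact h1.mul h2

lemma XX_cont (h : NSol m x₀ R T U) {ε : ℝ} (hε : 0 < ε) : Continuous (XX x₀ R U ε) :=
  continuous_parametric_integral_of_continuous (f := fun t y => U t y * PP x₀ R U ε t y)
    (h.cont.mul (h.PP_cont hε)) (isCompact_closedBall _ _)

lemma PP_contx (h : NSol m x₀ R T U) {ε : ℝ} (hε : 0 < ε) (t : ℝ) :
    Continuous (PP x₀ R U ε t) :=
  (h.PP_cont hε).comp (f := fun x : EE d => (t, x)) (by fun_prop)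

lemma PP_symm (h : NSol m x₀ R T U) {ε : ℝ} (hε : 0 < ε) (s t : ℝ) :
    (∫ y in closedBall x₀ R, U s y * PP x₀ R U ε t y) =
      ∫ y in closedBall x₀ R, U t y * PP x₀ R U ε s y := by
  have hKc : IsCompact (closedBall x₀ R) := isCompact_closedBall _ _
  unfold PP
  simp_rw [← integral_const_mul]
  rw [integral_integral_swap]
  · refine integral_congr_ae (Filter.Eventually.of_forall fun x => ?_)
    refine integral_congr_ae (Filter.Eventually.of_forall fun y => ?_)
    simp only [ker_symm x y]
    ring
  · rw [Measure.prod_restrict]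
    have hc : Continuous (fun q : EE d × EE d => U s q.1 * (U t q.2 * ker d ε (q.2 - q.1))) := by
      have h1 := (h.contx s).comp (continuous_fst (X := EE d) (Y := EE d))
      have h2 := (h.contx t).comp (continuous_snd (X := EE d) (Y := EE d))
      have h3 : Continuous fun q : EE d × EE d => ker d ε (q.2 - q.1) :=
        (ker_cont hε).comp (by fun_prop)
      exact h1.mul (h2.mul h3)
    exact hc.continuousOn.integrableOn_compact (hKc.prod hKc)

lemma XX_sub (h : NSol m x₀ R T U) {ε : ℝ} (hε : 0 < ε) (s t : ℝ) :
    XX x₀ R U ε t - XX x₀ R U ε s =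
      ∫ y in closedBall x₀ R, (U t y + U s y) * (PP x₀ R U ε t y - PP x₀ R U ε s y) := by
  have hKc : IsCompact (closedBall x₀ R) := isCompact_closedBall _ _
  have ii : ∀ a b, Integrable (fun y => U a y * PP x₀ R U ε b y)
      (volume.restrict (closedBall x₀ R)) := fun a b =>
    ((h.contx a).mul (h.PP_contx hε b)).continuousOn.integrableOn_compact hKc
  have e : ∀ y, (U t y + U s y) * (PP x₀ R U ε t y - PP x₀ R U ε s y) =
      (U t y * PP x₀ R U ε t y - U t y * PP x₀ R U ε s y) +
      (U s y * PP x₀ R U ε t y - U s y * PP x₀ R U ε s y) := fun y => by ring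
  simp_rw [e]
  rw [integral_add, integral_sub (ii _ _) (ii _ _),
    integral_sub (ii _ _) (ii _ _), h.PP_symm hε s t]
  · unfold XX
    ring
  · exact (ii _ _).sub (ii _ _)
  · exact (ii _ _).sub (ii _ _)

lemma unif (h : NSol m x₀ R T U) {η : ℝ} (hη : 0 < η) :
    ∃ ε > 0, ∀ s t, 0 ≤ s → t ≤ T → t < s + ε → ∀ y ∈ closedBall x₀ R, ∀ τ ∈ Icc s t,
      ∀ x ∈ ball y ε, U s y ^ m - η ≤ U τ x ^ m := by
  have hc : IsCompact (Icc (0:ℝ) T ×ˢ closedBall x₀ (R + 1)) :=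
    isCompact_Icc.prod (isCompact_closedBall _ _)
  have hu := hc.uniformContinuousOn_of_continuous h.contP.continuousOn
  rw [Metric.uniformContinuousOn_iff] at hu
  obtain ⟨δ, hδ, H⟩ := hu η hη
  refine ⟨min δ 1, by positivity, ?_⟩
  intro s t hs ht hst y hy τ hτ x hx
  rw [mem_ball] at hx
  rw [mem_closedBall] at hy
  have hx1 := hx.trans_le (min_le_left _ _)
  have hx2 := hx.trans_le (min_le_right _ _)
  have hst1 : t < s + δ := hst.trans_le (by gcongr; exact min_le_left _ _)
  have := H (s, y) ⟨⟨hs, (hτ.1.trans hτ.2).trans ht⟩, by rw [mem_closedBall]; linarith⟩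
    (τ, x) ⟨⟨hs.trans hτ.1, hτ.2.trans ht⟩, by
      rw [mem_closedBall]; linarith [dist_triangle x y x₀]⟩ (by
      rw [Prod.dist_eq, max_lt_iff]
      refine ⟨?_, by rw [dist_comm]; exact hx1⟩
      simp only [Real.dist_eq]
      rw [abs_lt]
      constructor <;> linarith [hτ.1, hτ.2])
  rw [Real.dist_eq, abs_lt] at this
  simp only at this
  linarith [this.2]

lemma energy (h : NSol m x₀ R T U) (hd : 3 ≤ d) {η : ℝ} (hη : 0 < η) :
    ∃ ε > 0, ∀ a ∈ Icc 0 T,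
      2 * cK d * (∫ τ in a..T, (YY m x₀ R U τ - η * MM x₀ R U τ)) ≤ XX x₀ R U ε a := by
  obtain ⟨ε, hε, H⟩ := h.unif hη
  refine ⟨ε, hε, ?_⟩
  intro a ha
  have hKc : IsCompact (closedBall x₀ R) := isCompact_closedBall _ _
  have hc := cK_pos hd
  have gc : Continuous fun τ => -(2 * cK d) * (YY m x₀ R U τ - η * MM x₀ R U τ) :=
    continuous_const.mul (h.YY_cont.sub (continuous_const.mul h.MM_cont))
  have key := image_le_of_liminf_slope_right_le_deriv_boundary (a := a) (b := T)
    (f := XX x₀ R U ε) (h.XX_cont hε).continuousOn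
    (B := fun t => XX x₀ R U ε a + ∫ τ in a..t, -(2 * cK d) * (YY m x₀ R U τ - η * MM x₀ R U τ))
    (B' := fun τ => -(2 * cK d) * (YY m x₀ R U τ - η * MM x₀ R U τ)) (by simp)
    (by
      refine Continuous.continuousOn (continuous_const.add ?_)
      exact intervalIntegral.continuous_primitive (fun _ _ => gc.intervalIntegrable _ _) _)
    (fun x hx => ((gc.integral_hasStrictDerivAt a x).hasDerivAt.const_add _).hasDerivWithinAt)
    (by
      intro s hs r hr
      apply Filter.Eventually.frequently
      set Q : ℝ → ℝ := fun t => ∫ y in closedBall x₀ R, (U t y + U s y) * (U s y ^ m - η) with hQ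
      have hQc : Continuous Q := by
        refine continuous_parametric_integral_of_continuous
          (f := fun t y => (U t y + U s y) * (U s y ^ m - η)) ?_ hKc
        exact (h.cont.add ((h.contx s).comp continuous_snd)).mul
          (((h.contPx s).comp continuous_snd).sub continuous_const)
      have hQs : -(cK d) * Q s = -(2 * cK d) * (YY m x₀ R U s - η * MM x₀ R U s) := by
        have e : ∀ y, (U s y + U s y) * (U s y ^ m - η) =
            2 * (U s y * U s y ^ m) - (2 * η) * U s y := fun y => by ring
        simp only [hQ, e]
        rw [integral_sub, integral_const_mul, integral_const_mul]
        · unfold YY MM; ring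
        · exact (continuous_const.mul ((h.contx s).mul (h.contPx s))).continuousOn.integrableOn_compact hKc
        · exact (continuous_const.mul (h.contx s)).continuousOn.integrableOn_compact hKc
      have hQr : -(cK d) * Q s < r := by rw [hQs]; exact hr
      have ev1 : ∀ᶠ t in nhdsWithin s (Ioi s), -(cK d) * Q t < r :=
        ((continuous_const.mul hQc).continuousAt.eventually_lt_const hQr).filter_mono
          nhdsWithin_le_nhds
      have ev2 : ∀ᶠ t in nhdsWithin s (Ioi s), t < min T (s + ε) :=
        (eventually_lt_nhds (lt_min hs.2 (by linarith))).filter_mono nhdsWithin_le_nhds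
      filter_upwards [ev1, ev2, self_mem_nhdsWithin] with t h1 h2 h3
      have h3' : s < t := h3
      refine lt_of_le_of_lt ?_ h1
      rw [slope_def_field, div_le_iff₀ (by linarith), h.XX_sub hε, hQ]
      simp only
      rw [mul_comm, ← mul_assoc, ← integral_const_mul]
      refine setIntegral_mono_on ?_ ?_ measurableSet_closedBall ?_
      · exact (((h.contx t).add (h.contx s)).mul
          ((h.PP_contx hε t).sub (h.PP_contx hε s))).continuousOn.integrableOn_compact hKc
      · exact (continuous_const.mul (((h.contx t).add (h.contx s)).mul
          ((h.contPx s).sub continuous_const))).continuousOn.integrableOn_compact hKc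
      · intro y hy
        have hs0 : 0 ≤ s := ha.1.trans hs.1
        have htT : t ≤ T := (h2.trans_le (min_le_left _ _)).le
        have hp := h.pot_decr hd (η := η) hε hs0 h3'.le htT y
          (fun τ hτ x hx => H s t hs0 htT (h2.trans_le (min_le_right _ _)) y hy τ hτ x hx)
        have hu : 0 ≤ U t y + U s y := add_nonneg (h.nonneg _ _) (h.nonneg _ _)
        have := mul_le_mul_of_nonneg_left hp hu
        unfold PP
        calc _ ≤ _ := this
          _ = _ := by ring)
  have k := key (right_mem_Icc.2 ha.2)
  have z : XX x₀ R U ε T = 0 := by unfold XX; simp [h.ext]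
  rw [z, intervalIntegral.integral_const_mul] at k
  linarith

end NSol

lemma ker_ball {d : ℕ} {ε r : ℝ} (hd : 3 ≤ d) (hr : 0 < r) (x : EE d) :
    ∫ y in ball x r, ker d ε (y - x) ≤ d * volume.real (ball (0 : EE d) 1) * r ^ 2 := by
  have h3 : (3 : ℝ) ≤ d := by exact_mod_cast hd
  have : Nonempty (Fin d) := ⟨⟨0, by omega⟩⟩
  set f : ℝ → ℝ := (Iio r).indicator (fun ρ => (ε ^ 2 + ρ ^ 2) ^ (-((d - 2 : ℝ) / 2))) with hf
  have e1 : ∫ y in ball x r, ker d ε (y - x) = ∫ z : EE d, f ‖z‖ := by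
    rw [← integral_indicator measurableSet_ball, ← integral_sub_right_eq_self (fun z : EE d => f ‖z‖) x]
    refine integral_congr_ae (Filter.Eventually.of_forall fun y => ?_)
    simp only [hf, indicator, mem_ball, dist_eq_norm, mem_Iio, ker]
  have e2 := integral_fun_norm_addHaar (volume : Measure (EE d)) f
  rw [finrank_euclideanSpace_fin] at e2
  rw [e1, e2, nsmul_eq_mul, smul_eq_mul, mul_assoc]
  have hω := omega_pos d
  gcongr
  have e3 : ∀ y, y ^ (d - 1) • f y = (Iio r).indicator
      (fun ρ => ρ ^ (d - 1) * (ε ^ 2 + ρ ^ 2) ^ (-((d - 2 : ℝ) / 2))) y := by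
    intro y
    by_cases hy : y ∈ Iio r
    · simp [hf, hy, indicator]
    · simp [hf, indicator]
  simp_rw [e3]
  rw [setIntegral_indicator measurableSet_Iio, Ioi_inter_Iio]
  have b : ∀ ρ ∈ Ioo 0 r, ‖ρ ^ (d - 1) * (ε ^ 2 + ρ ^ 2) ^ (-((d - 2 : ℝ) / 2))‖ ≤ r := by
    intro ρ hρ
    have hρ0 : 0 < ρ := hρ.1
    have h1 : (ε ^ 2 + ρ ^ 2) ^ (-((d - 2 : ℝ) / 2)) ≤ ρ ^ (2 - d : ℝ) := by
      have e : ρ ^ (2 - d : ℝ) = (ρ ^ 2) ^ (-((d - 2 : ℝ) / 2)) := by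
        rw [← Real.rpow_natCast, ← Real.rpow_mul hρ0.le]
        congr 1; push_cast; ring
      rw [e]
      apply Real.rpow_le_rpow_of_nonpos (by positivity) _ (by linarith)
      nlinarith [sq_nonneg ε]
    rw [Real.norm_eq_abs, abs_of_nonneg (by positivity)]
    calc _ ≤ ρ ^ (d - 1) * ρ ^ (2 - d : ℝ) := by gcongr
      _ = ρ := by
        rw [← Real.rpow_natCast, ← Real.rpow_add hρ0, Nat.cast_sub (by omega)]
        push_cast
        rw [show (d : ℝ) - 1 + (2 - d) = 1 by ring, Real.rpow_one]
      _ ≤ r := hρ.2.le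
  have k := norm_setIntegral_le_of_norm_le_const (μ := volume) (s := Ioo 0 r) (by simp) b
  refine (le_abs_self _).trans (k.trans ?_)
  rw [Real.volume_real_Ioo_of_le hr.le]
  nlinarith

noncomputable def CX (d : ℕ) : ℝ := 2 * (d * volume.real (ball (0 : EE d) 1) + 1)

lemma CX_pos (d : ℕ) : 0 < CX d := by
  have := omega_pos d
  unfold CX; positivity

section
variable {d : ℕ} {x₀ : EE d} {R ε : ℝ} {u : EE d → ℝ}

lemma min_pot (hd : 3 ≤ d) (hε : 0 < ε) (hu : Continuous u) (hu0 : ∀ x, 0 ≤ u x) {M : ℝ}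
    (hM : 0 < M) (hMu : ∫ x in closedBall x₀ R, u x ≤ M) (y : EE d) :
    ∫ x in closedBall x₀ R, min (u y) (u x) * ker d ε (x - y) ≤
      (d * volume.real (ball (0 : EE d) 1) + 1) * M ^ (2 / d : ℝ) * u y ^ (1 - 2 / d : ℝ) := by
  have h3 : (3 : ℝ) ≤ d := by exact_mod_cast hd
  have hKc : IsCompact (closedBall x₀ R) := isCompact_closedBall _ _
  have h2d : 2 / (d : ℝ) < 1 := by rw [div_lt_one (by linarith)]; linarith
  have kc : Continuous fun x => ker d ε (x - y) := (ker_cont hε).comp (by fun_prop)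
  rcases (hu0 y).eq_or_lt with h0 | h0
  · have : ∀ x, min (u y) (u x) = 0 := fun x => by rw [← h0]; exact min_eq_left (hu0 x)
    simp only [this, zero_mul, integral_zero]
    rw [← h0, Real.zero_rpow (by linarith)]
    simp
  set r := (M / u y) ^ (1 / d : ℝ) with hr
  have hrp : 0 < r := by positivity
  have hω := omega_pos d
  have hpt : ∀ x, min (u y) (u x) * ker d ε (x - y) ≤
      (ball y r).indicator (fun x => u y * ker d ε (x - y)) x + r ^ (2 - d : ℝ) * u x := by
    intro x
    have hk := ker_nonneg ε (x - y)
    have hr0 : 0 ≤ r ^ (2 - d : ℝ) := by positivity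
    by_cases hx : x ∈ ball y r
    · rw [indicator_of_mem hx]
      have : min (u y) (u x) * ker d ε (x - y) ≤ u y * ker d ε (x - y) := by
        gcongr; exact min_le_left _ _
      have := mul_nonneg hr0 (hu0 x)
      linarith
    · rw [indicator_of_notMem hx, zero_add, mul_comm]
      rw [mem_ball, dist_eq_norm, not_lt] at hx
      have := ker_le (ε := ε) hd hrp hx
      gcongr
      · exact le_min (hu0 y) (hu0 x)
      · exact min_le_right _ _
  have i0 : Integrable ((ball y r).indicator (fun x => u y * ker d ε (x - y))) := by
    rw [integrable_indicator_iff measurableSet_ball]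
    exact ((continuous_const.mul kc).continuousOn.integrableOn_compact
      (isCompact_closedBall y r)).mono_set ball_subset_closedBall
  have i1 : Integrable (fun x => r ^ (2 - d : ℝ) * u x) (volume.restrict (closedBall x₀ R)) :=
    (continuous_const.mul hu).continuousOn.integrableOn_compact hKc
  have e1 : u y * r ^ 2 = M ^ (2 / d : ℝ) * u y ^ (1 - 2 / d : ℝ) := by
    rw [hr, ← Real.rpow_natCast, ← Real.rpow_mul (by positivity), Real.div_rpow hM.le h0.le,
      Real.rpow_sub h0, Real.rpow_one]
    rw [show (1 / (d : ℝ)) * ((2 : ℕ) : ℝ) = 2 / d by push_cast; ring]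
    field_simp
  have e2 : r ^ (2 - d : ℝ) * M = M ^ (2 / d : ℝ) * u y ^ (1 - 2 / d : ℝ) := by
    rw [Real.rpow_sub hrp, show r ^ (2 : ℝ) = r ^ 2 from Real.rpow_two r]
    have : r ^ (d : ℝ) = M / u y := by
      rw [hr, ← Real.rpow_mul (by positivity), one_div_mul_cancel (by linarith), Real.rpow_one]
    rw [this, ← e1]
    field_simp
  calc _ ≤ ∫ x in closedBall x₀ R, ((ball y r).indicator (fun x => u y * ker d ε (x - y)) x
          + r ^ (2 - d : ℝ) * u x) := by
        refine integral_mono ?_ (i0.integrableOn.add i1) hpt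
        exact ((continuous_const.min hu).mul kc).continuousOn.integrableOn_compact hKc
    _ = (∫ x in closedBall x₀ R, (ball y r).indicator (fun x => u y * ker d ε (x - y)) x)
          + r ^ (2 - d : ℝ) * ∫ x in closedBall x₀ R, u x := by
        rw [integral_add i0.integrableOn i1, integral_const_mul]
    _ ≤ u y * (d * volume.real (ball (0 : EE d) 1) * r ^ 2) + r ^ (2 - d : ℝ) * M := by
        have q1 : (∫ x in closedBall x₀ R, (ball y r).indicator (fun x => u y * ker d ε (x - y)) x)
            ≤ ∫ x, (ball y r).indicator (fun x => u y * ker d ε (x - y)) x := by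
          refine setIntegral_le_integral i0 (Filter.Eventually.of_forall fun x => ?_)
          exact indicator_nonneg (fun x _ => mul_nonneg h0.le (ker_nonneg _ _)) x
        have q0 : (∫ x, (ball y r).indicator (fun x => u y * ker d ε (x - y)) x) =
            u y * ∫ x in ball y r, ker d ε (x - y) := by
          rw [integral_indicator measurableSet_ball, integral_const_mul]
        rw [q0] at q1
        have q2 := mul_le_mul_of_nonneg_left (ker_ball (ε := ε) hd hrp y) h0.le
        have q3 : r ^ (2 - d : ℝ) * (∫ x in closedBall x₀ R, u x) ≤ r ^ (2 - d : ℝ) * M := by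
          gcongr
        linarith
    _ = _ := by
        rw [e2]
        calc _ = d * volume.real (ball (0 : EE d) 1) * (u y * r ^ 2)
              + M ^ (2 / d : ℝ) * u y ^ (1 - 2 / d : ℝ) := by ring
          _ = _ := by rw [e1]; ring

lemma X_le (hd : 3 ≤ d) (hε : 0 < ε) (hu : Continuous u) (hu0 : ∀ x, 0 ≤ u x) {M : ℝ}
    (hM : 0 < M) (hMu : ∫ x in closedBall x₀ R, u x ≤ M) :
    ∫ y in closedBall x₀ R, u y * ∫ x in closedBall x₀ R, u x * ker d ε (x - y) ≤
      CX d * M ^ (2 / d : ℝ) * ∫ y in closedBall x₀ R, u y * u y ^ (1 - 2 / d : ℝ) := by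
  have h3 : (3 : ℝ) ≤ d := by exact_mod_cast hd
  have h2d : 2 / (d : ℝ) < 1 := by rw [div_lt_one (by linarith)]; linarith
  have hKc : IsCompact (closedBall x₀ R) := isCompact_closedBall _ _
  have kc : Continuous fun q : EE d × EE d => ker d ε (q.2 - q.1) :=
    (ker_cont hε).comp (by fun_prop)
  have u1 : Continuous fun q : EE d × EE d => u q.1 := hu.comp continuous_fst
  have u2 : Continuous fun q : EE d × EE d => u q.2 := hu.comp continuous_snd
  have mc : Continuous fun q : EE d × EE d => min (u q.1) (u q.2) * ker d ε (q.2 - q.1) :=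
    (u1.min u2).mul kc
  have c1 : Continuous fun q : EE d × EE d =>
      u q.1 * (min (u q.1) (u q.2) * ker d ε (q.2 - q.1)) := u1.mul mc
  have c2 : Continuous fun q : EE d × EE d =>
      u q.2 * (min (u q.1) (u q.2) * ker d ε (q.2 - q.1)) := u2.mul mc
  have c3 : Continuous fun q : EE d × EE d =>
      u q.1 * (u q.2 * ker d ε (q.2 - q.1)) := u1.mul (u2.mul kc)
  have sl : ∀ {g : EE d × EE d → ℝ}, Continuous g → ∀ y, Integrable (fun x => g (y, x))
      (volume.restrict (closedBall x₀ R)) := fun hg y =>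
    (hg.comp (by fun_prop : Continuous fun x : EE d => (y, x))).continuousOn.integrableOn_compact hKc
  have pc : ∀ {g : EE d × EE d → ℝ}, Continuous g →
      Integrable (fun y => ∫ x in closedBall x₀ R, g (y, x)) (volume.restrict (closedBall x₀ R)) :=
    fun {g} hg => (continuous_parametric_integral_of_continuous (f := fun y x => g (y, x)) hg
      hKc).continuousOn.integrableOn_compact hKc
  have hsplit : (∫ y in closedBall x₀ R, ∫ x in closedBall x₀ R, u y * (u x * ker d ε (x - y))) ≤
      (∫ y in closedBall x₀ R, ∫ x in closedBall x₀ R, u y * (min (u y) (u x) * ker d ε (x - y))) +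
      ∫ y in closedBall x₀ R, ∫ x in closedBall x₀ R, u x * (min (u y) (u x) * ker d ε (x - y)) := by
    rw [← integral_add (pc c1) (pc c2)]
    refine integral_mono (pc c3) ((pc c1).add (pc c2)) ?_
    intro y
    simp only
    rw [← integral_add (sl c1 y) (sl c2 y)]
    refine integral_mono (sl c3 y)
      ((sl c1 y).add (sl c2 y)) ?_
    intro x
    simp only
    have hk := ker_nonneg ε (x - y)
    have hx := hu0 x
    have hy := hu0 y
    have : u y * u x ≤ (u y + u x) * min (u y) (u x) := by
      rcases le_total (u y) (u x) with hh | hh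
      · rw [min_eq_left hh]; nlinarith
      · rw [min_eq_right hh]; nlinarith
    nlinarith [mul_le_mul_of_nonneg_right this hk]
  have hswap : (∫ y in closedBall x₀ R, ∫ x in closedBall x₀ R,
        u x * (min (u y) (u x) * ker d ε (x - y))) =
      ∫ y in closedBall x₀ R, ∫ x in closedBall x₀ R, u y * (min (u y) (u x) * ker d ε (x - y)) := by
    rw [integral_integral_swap]
    · refine integral_congr_ae (Filter.Eventually.of_forall fun x => ?_)
      refine integral_congr_ae (Filter.Eventually.of_forall fun y => ?_)
      simp only [ker_symm x y, min_comm (u x) (u y)]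
    · rw [Measure.prod_restrict]
      exact c2.continuousOn.integrableOn_compact (hKc.prod hKc)
  simp_rw [integral_const_mul] at hsplit hswap
  rw [hswap] at hsplit
  have hmain : (∫ y in closedBall x₀ R, u y *
      ∫ x in closedBall x₀ R, min (u y) (u x) * ker d ε (x - y)) ≤
      ∫ y in closedBall x₀ R, (d * volume.real (ball (0 : EE d) 1) + 1) * M ^ (2 / d : ℝ) *
        (u y * u y ^ (1 - 2 / d : ℝ)) := by
    refine integral_mono ?_ ?_ ?_
    · have := pc c1
      simp only [integral_const_mul] at this
      exact this
    · have : Continuous fun y => u y ^ (1 - 2 / d : ℝ) :=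
        hu.rpow_const fun _ => Or.inr (by linarith)
      exact (continuous_const.mul (hu.mul this)).continuousOn.integrableOn_compact hKc
    · intro y
      have := mul_le_mul_of_nonneg_left (min_pot hd hε hu hu0 hM hMu y) (hu0 y)
      simp only
      linarith
  rw [integral_const_mul] at hmain
  unfold CX
  linarith

end

lemma rp3 {x a b c e : ℝ} (hx : 0 < x) (h : a + b + c = e) : x ^ a * x ^ b * x ^ c = x ^ e := by
  rw [← Real.rpow_add hx, ← Real.rpow_add hx, h]

lemma alg1 {p m C V μ M Y G : ℝ} (hV : 0 < V) (hμ : 0 < μ)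
    (hA : ∀ M' > 0, M ≤ M' → ∀ h > 0, G ≤ C * M' ^ p * (h ^ (1 - p) * M' + h ^ (1 - p - m) * Y))
    (hM : M ≤ V * μ) {θ : ℝ} (hθ : 0 < θ) :
    G / (V * V ^ p * μ ^ 2) ≤ C * (θ ^ (1 - p) + θ ^ (1 - p - m) * (Y / (V * μ ^ (1 + m)))) := by
  have k := hA (V * μ) (by positivity) hM (μ * θ) (by positivity)
  rw [div_le_iff₀ (by positivity)]
  refine k.trans (le_of_eq ?_)
  have r1 : μ ^ p * μ ^ (1 - p) * μ ^ (1 : ℝ) = μ ^ (2 : ℝ) := rp3 hμ (by ring)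
  have r2 : μ ^ p * μ ^ (1 - p - m) * μ ^ (1 + m) = μ ^ (2 : ℝ) := rp3 hμ (by ring)
  rw [Real.rpow_one, Real.rpow_two] at r1
  rw [Real.rpow_two] at r2
  rw [Real.mul_rpow hV.le hμ.le, Real.mul_rpow hμ.le hθ.le, Real.mul_rpow hμ.le hθ.le]
  have hY : Y = Y / (V * μ ^ (1 + m)) * V * μ ^ (1 + m) := by field_simp
  set y := Y / (V * μ ^ (1 + m))
  rw [hY]
  calc _ = C * V * V ^ p * (θ ^ (1 - p) * (μ ^ p * μ ^ (1 - p) * μ)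
        + θ ^ (1 - p - m) * y * (μ ^ p * μ ^ (1 - p - m) * μ ^ (1 + m))) := by ring
    _ = _ := by rw [r1, r2]; ring

lemma alg2 {p m C V μ M Y G : ℝ} (hV : 0 < V) (hμ : 0 < μ) (hm : 0 < m) (hY : 0 < Y)
    (hA : ∀ M' > 0, M ≤ M' → ∀ h > 0, G ≤ C * M' ^ p * (h ^ (1 - p) * M' + h ^ (1 - p - m) * Y))
    (hB : ∀ k > 0, M ≤ k * V + k ^ (-m) * Y) :
    G / (V * V ^ p * μ ^ 2) ≤ 3 * 2 ^ p * C * (Y / (V * μ ^ (1 + m))) ^ (2 / (1 + m)) := by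
  have hYe : Y = Y / (V * μ ^ (1 + m)) * V * μ ^ (1 + m) := by field_simp
  set y := Y / (V * μ ^ (1 + m)) with hy
  have hyp : 0 < y := by positivity
  set w := y ^ (1 / (1 + m)) with hw
  have hwp : 0 < w := by positivity
  have hw1 : w ^ (1 + m) = y := by
    rw [hw, ← Real.rpow_mul hyp.le, one_div_mul_cancel (by linarith), Real.rpow_one]
  have hw2 : y ^ (2 / (1 + m)) = w ^ 2 := by
    rw [hw, ← Real.rpow_natCast, ← Real.rpow_mul hyp.le]
    congr 1; push_cast; ring
  set k := μ * w with hk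
  have hkp : 0 < k := by positivity
  have hYk : Y = k ^ (1 + m) * V := by
    rw [hk, Real.mul_rpow hμ.le hwp.le, hw1, hYe]; ring
  have s1 : k ^ (-m) * k ^ (1 + m) = k := by
    rw [← Real.rpow_add hkp, show -m + (1 + m) = 1 by ring, Real.rpow_one]
  have hM := hB k hkp
  have hM2 : M ≤ 2 * k * V := by
    calc M ≤ _ := hM
      _ = k * V + (k ^ (-m) * k ^ (1 + m)) * V := by rw [hYk]; ring
      _ = _ := by rw [s1]; ring
  have g := hA (2 * k * V) (by positivity) hM2 k hkp
  have r1 : k ^ p * k ^ (1 - p) * k ^ (1 : ℝ) = k ^ (2 : ℝ) := rp3 hkp (by ring)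
  have r2 : k ^ p * k ^ (1 - p - m) * k ^ (1 + m) = k ^ (2 : ℝ) := rp3 hkp (by ring)
  rw [Real.rpow_one, Real.rpow_two] at r1
  rw [Real.rpow_two] at r2
  rw [div_le_iff₀ (by positivity), hw2]
  refine g.trans (le_of_eq ?_)
  rw [Real.mul_rpow (by positivity) hV.le, Real.mul_rpow (by positivity) hkp.le, hYk]
  calc _ = C * 2 ^ p * V ^ p * V * (2 * (k ^ p * k ^ (1 - p) * k)
        + (k ^ p * k ^ (1 - p - m) * k ^ (1 + m))) := by ring
    _ = _ := by rw [r1, r2, hk]; ring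

lemma alg3 {p m C Γ y : ℝ} (hp1 : p < 1) (hC : 0 < C) (hΓ : 0 < Γ)
    (H : ∀ θ > 0, Γ ≤ C * (θ ^ (1 - p) + θ ^ (1 - p - m) * y)) :
    (1 / (2 * C)) ^ (m / (1 - p)) * Γ ^ (m / (1 - p)) ≤ y := by
  have hq : 0 < 1 - p := by linarith
  set e := Γ / (2 * C) with he
  have hep : 0 < e := by positivity
  have k := H (e ^ (1 / (1 - p))) (by positivity)
  rw [← Real.rpow_mul hep.le, ← Real.rpow_mul hep.le, one_div_mul_cancel hq.ne', Real.rpow_one] at k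
  rw [← Real.mul_rpow (by positivity) hΓ.le, show 1 / (2 * C) * Γ = e by rw [he]; ring]
  have hCe : C * e = Γ / 2 := by rw [he]; field_simp
  have k2 : e ≤ e ^ (1 / (1 - p) * (1 - p - m)) * y := by
    have : C * e ≤ C * (e ^ (1 / (1 - p) * (1 - p - m)) * y) := by
      rw [mul_add] at k; linarith
    exact le_of_mul_le_mul_left this hC
  have e1 : 1 / (1 - p) * (1 - p - m) = 1 - m / (1 - p) := by field_simp
  rw [e1, Real.rpow_sub hep, Real.rpow_one, div_mul_eq_mul_div, le_div_iff₀ (by positivity)] at k2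
  exact le_of_mul_le_mul_left k2 hep

lemma alg4 {m C Γ y : ℝ} (hm : 0 < m) (hC : 0 < C) (hΓ : 0 < Γ) (hy : 0 < y)
    (H : Γ ≤ C * y ^ (2 / (1 + m))) :
    (1 / C) ^ ((1 + m) / 2) * Γ ^ ((1 + m) / 2) ≤ y := by
  rw [← Real.mul_rpow (by positivity) hΓ.le]
  have : 1 / C * Γ ≤ y ^ (2 / (1 + m)) := by
    rw [one_div, inv_mul_le_iff₀ hC]; exact H
  calc _ ≤ (y ^ (2 / (1 + m))) ^ ((1 + m) / 2) := by gcongr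
    _ = y := by
      rw [← Real.rpow_mul hy.le]
      have : 2 / (1 + m) * ((1 + m) / 2) = 1 := by field_simp
      rw [this, Real.rpow_one]

lemma ode_bd {Γ y : ℝ → ℝ} {T L κ₁ κ₂ a b : ℝ} (hT : 0 < T) (hL : 0 < L) (hκ₁ : 0 < κ₁)
    (hκ₂ : 0 < κ₂) (ha : 1 < a) (hb : b < 1) (hc : Continuous Γ)
    (hder : ∀ s ∈ Ioo 0 T, HasDerivAt Γ (-(L * y s)) s) (hpos : ∀ s ∈ Ico 0 T, 0 < Γ s)
    (hΓT : Γ T = 0)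
    (h1 : ∀ s ∈ Ioo 0 T, κ₁ * Γ s ^ a ≤ y s) (h2 : ∀ s ∈ Ioo 0 T, κ₂ * Γ s ^ b ≤ y s) :
    T * L ≤ 1 / (κ₁ * (a - 1)) + 1 / (κ₂ * (1 - b)) := by
  have ha' : 0 < a - 1 := by linarith
  have hb' : 0 < 1 - b := by linarith
  -- second phase
  have ph2 : ∀ t ∈ Ico 0 T, Γ t ≤ 1 → (T - t) * L ≤ 1 / (κ₂ * (1 - b)) := by
    intro t ht hle
    have anti : AntitoneOn (fun s => Γ s ^ (1 - b) + (1 - b) * κ₂ * L * s) (Icc t T) := by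
      have cont : ContinuousOn (fun s => Γ s ^ (1 - b) + (1 - b) * κ₂ * L * s) (Icc t T) :=
        ((hc.rpow_const fun _ => Or.inr hb'.le).add (by fun_prop)).continuousOn
      have hd : ∀ s ∈ Ioo t T, HasDerivAt (fun s => Γ s ^ (1 - b) + (1 - b) * κ₂ * L * s)
          (-(L * y s) * (1 - b) * Γ s ^ (1 - b - 1) + (1 - b) * κ₂ * L * 1) s := by
        intro s hs
        have hs' : s ∈ Ioo 0 T := ⟨ht.1.trans_lt hs.1, hs.2⟩
        have hp := hpos s ⟨hs'.1.le, hs'.2⟩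
        exact ((hder s hs').rpow_const (Or.inl hp.ne')).add ((hasDerivAt_id s).const_mul _)
      refine antitoneOn_of_deriv_nonpos (convex_Icc _ _) cont ?_ ?_
      · rw [interior_Icc]
        exact fun s hs => (hd s hs).differentiableAt.differentiableWithinAt
      · rw [interior_Icc]
        intro s hs
        rw [(hd s hs).deriv]
        have hs' : s ∈ Ioo 0 T := ⟨ht.1.trans_lt hs.1, hs.2⟩
        have hp := hpos s ⟨hs'.1.le, hs'.2⟩
        have q := h2 s hs'
        have e : Γ s ^ b * Γ s ^ (1 - b - 1) = 1 := by
          rw [← Real.rpow_add hp, show b + (1 - b - 1) = 0 by ring, Real.rpow_zero]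
        have q2 := mul_le_mul_of_nonneg_right q (Real.rpow_nonneg hp.le (1 - b - 1))
        rw [mul_assoc, e, mul_one] at q2
        have := mul_le_mul_of_nonneg_left q2 (show 0 ≤ L * (1 - b) by positivity)
        linarith
    have k := anti (left_mem_Icc.2 ht.2.le) (right_mem_Icc.2 ht.2.le) ht.2.le
    simp only [hΓT, Real.zero_rpow hb'.ne'] at k
    have : Γ t ^ (1 - b) ≤ 1 := Real.rpow_le_one (hpos t ht).le hle hb'.le
    rw [le_div_iff₀ (by positivity)]
    linarith
  have hnn : 0 < 1 / (κ₁ * (a - 1)) := by positivity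
  rcases le_or_gt (Γ 0) 1 with h0 | h0
  · have := ph2 0 ⟨le_rfl, hT⟩ h0
    rw [sub_zero] at this
    linarith
  obtain ⟨t, ht, hte⟩ : ∃ t ∈ Icc 0 T, Γ t = 1 := by
    have := intermediate_value_Icc' hT.le hc.continuousOn
    exact this ⟨by rw [hΓT]; exact zero_le_one, h0.le⟩
  have htT : t < T := by
    rcases ht.2.eq_or_lt with e | e
    · rw [e, hΓT] at hte; norm_num at hte
    · exact e
  have k2 := ph2 t ⟨ht.1, htT⟩ hte.le
  have mono : MonotoneOn (fun s => Γ s ^ (1 - a) - (a - 1) * κ₁ * L * s) (Icc 0 t) := by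
    have hp : ∀ s ∈ Icc 0 t, 0 < Γ s := fun s hs => hpos s ⟨hs.1, hs.2.trans_lt htT⟩
    have cont : ContinuousOn (fun s => Γ s ^ (1 - a) - (a - 1) * κ₁ * L * s) (Icc 0 t) := by
      refine ContinuousOn.sub ?_ (by fun_prop)
      exact hc.continuousOn.rpow_const fun s hs => Or.inl (hp s hs).ne'
    have hd : ∀ s ∈ Ioo 0 t, HasDerivAt (fun s => Γ s ^ (1 - a) - (a - 1) * κ₁ * L * s)
        (-(L * y s) * (1 - a) * Γ s ^ (1 - a - 1) - (a - 1) * κ₁ * L * 1) s := by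
      intro s hs
      exact ((hder s ⟨hs.1, hs.2.trans htT⟩).rpow_const
        (Or.inl (hp s (Ioo_subset_Icc_self hs)).ne')).sub ((hasDerivAt_id s).const_mul _)
    refine monotoneOn_of_deriv_nonneg (convex_Icc _ _) cont ?_ ?_
    · rw [interior_Icc]
      exact fun s hs => (hd s hs).differentiableAt.differentiableWithinAt
    · rw [interior_Icc]
      intro s hs
      rw [(hd s hs).deriv]
      have hp := hp s (Ioo_subset_Icc_self hs)
      have q := h1 s ⟨hs.1, hs.2.trans htT⟩
      have e : Γ s ^ a * Γ s ^ (1 - a - 1) = 1 := by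
        rw [← Real.rpow_add hp, show a + (1 - a - 1) = 0 by ring, Real.rpow_zero]
      have q2 := mul_le_mul_of_nonneg_right q (Real.rpow_nonneg hp.le (1 - a - 1))
      rw [mul_assoc, e, mul_one] at q2
      have := mul_le_mul_of_nonneg_left q2 (show 0 ≤ L * (a - 1) by positivity)
      linarith
  have k := mono (left_mem_Icc.2 ht.1) (right_mem_Icc.2 ht.1) ht.1
  simp only [hte, Real.one_rpow, mul_zero, sub_zero] at k
  have k0 : 0 ≤ Γ 0 ^ (1 - a) := Real.rpow_nonneg (by linarith) _
  have k1 : t * L ≤ 1 / (κ₁ * (a - 1)) := by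
    rw [le_div_iff₀ (by positivity)]
    linarith
  linarith

namespace NSol

variable {d : ℕ} {m : ℝ} {x₀ : EE d} {R T : ℝ} {U : ℝ → EE d → ℝ}

lemma MM_nonneg (h : NSol m x₀ R T U) (t : ℝ) : 0 ≤ MM x₀ R U t :=
  integral_nonneg fun x => h.nonneg t x

lemma G_le (h : NSol m x₀ R T U) (hd : 3 ≤ d) {a : ℝ} (ha : a ∈ Icc 0 T) {M : ℝ} (hM : 0 < M)
    (hMM : MM x₀ R U a ≤ M) :
    2 * cK d * (∫ τ in a..T, YY m x₀ R U τ) ≤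
      CX d * M ^ (2 / d : ℝ) * ∫ y in closedBall x₀ R, U a y * U a y ^ (1 - 2 / d : ℝ) := by
  have hc := cK_pos hd
  set I := ∫ τ in a..T, MM x₀ R U τ with hI
  have hI0 : 0 ≤ I := intervalIntegral.integral_nonneg ha.2 fun τ _ => h.MM_nonneg τ
  refine le_of_forall_pos_le_add fun e he => ?_
  set η := e / (2 * cK d * I + 1) with hη
  have hηp : 0 < η := by positivity
  obtain ⟨ε, hε, H⟩ := h.energy hd hηp
  have k1 := H a ha
  have k2 : XX x₀ R U ε a ≤ _ := X_le hd hε (h.contx a) (h.nonneg a) hM hMM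
  have iM : IntervalIntegrable (fun τ => η * MM x₀ R U τ) volume a T :=
    (continuous_const.mul h.MM_cont).intervalIntegrable _ _
  rw [intervalIntegral.integral_sub (h.YY_cont.intervalIntegrable _ _)
    iM, intervalIntegral.integral_const_mul,
    ← hI] at k1
  have k3 : η * (2 * cK d * I) ≤ e := by
    rw [hη, div_mul_eq_mul_div, div_le_iff₀ (by positivity)]
    nlinarith
  linarith

lemma pt1 {v k a b : ℝ} (hv : 0 ≤ v) (hk : 0 < k) (ha : 0 < a) (hab : a < b) :
    v * v ^ a ≤ k ^ a * v + k ^ (a - b) * (v * v ^ b) := by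
  rcases le_or_gt v k with h | h
  · have : v ^ a ≤ k ^ a := by gcongr
    have h1 := mul_le_mul_of_nonneg_left this hv
    have : 0 ≤ k ^ (a - b) * (v * v ^ b) := by positivity
    linarith
  · have hvp : 0 < v := hk.trans h
    have e : v ^ a = v ^ (a - b) * v ^ b := by rw [← Real.rpow_add hvp]; ring_nf
    have h1 : v ^ (a - b) ≤ k ^ (a - b) := Real.rpow_le_rpow_of_nonpos hk h.le (by linarith)
    have h2 := mul_le_mul_of_nonneg_right h1 (show 0 ≤ v * v ^ b by positivity)
    have : 0 ≤ k ^ a * v := by positivity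
    rw [e]
    linarith

lemma pt2 {v k b : ℝ} (hv : 0 ≤ v) (hk : 0 < k) (hb : 0 < b) :
    v ≤ k + k ^ (-b) * (v * v ^ b) := by
  rcases le_or_gt v k with h | h
  · have : 0 ≤ k ^ (-b) * (v * v ^ b) := by positivity
    linarith
  · have hvp : 0 < v := hk.trans h
    have e : 1 = v ^ (-b) * v ^ b := by rw [← Real.rpow_add hvp]; simp
    have h1 : v ^ (-b) ≤ k ^ (-b) := Real.rpow_le_rpow_of_nonpos hk h.le (by linarith)
    have h2 := mul_le_mul_of_nonneg_right h1 (show 0 ≤ v * v ^ b by positivity)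
    have : v ^ (-b) * (v * v ^ b) = v := by
      calc _ = v * (v ^ (-b) * v ^ b) := by ring
        _ = v := by rw [← e, mul_one]
    linarith

lemma hA (h : NSol m x₀ R T U) (hd : 3 ≤ d) (hmc : 1 - 2 / (d : ℝ) < m) {a : ℝ}
    (ha : a ∈ Icc 0 T) {M : ℝ} (hM : 0 < M)
    (hMM : MM x₀ R U a ≤ M) {k : ℝ} (hk : 0 < k) :
    2 * cK d * (∫ τ in a..T, YY m x₀ R U τ) ≤
      CX d * M ^ (2 / d : ℝ) * (k ^ (1 - 2 / d : ℝ) * M + k ^ (1 - 2 / d - m : ℝ) * YY m x₀ R U a) := by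
  have h3 : (3 : ℝ) ≤ d := by exact_mod_cast hd
  have h2d : 2 / (d : ℝ) < 1 := by rw [div_lt_one (by linarith)]; linarith
  have hKc : IsCompact (closedBall x₀ R) := isCompact_closedBall _ _
  have hC := CX_pos d
  refine (h.G_le hd ha hM hMM).trans ?_
  gcongr
  have i1 : IntegrableOn (fun y => U a y) (closedBall x₀ R) :=
    (h.contx a).continuousOn.integrableOn_compact hKc
  have i2 : IntegrableOn (fun y => U a y * U a y ^ m) (closedBall x₀ R) :=
    ((h.contx a).mul (h.contPx a)).continuousOn.integrableOn_compact hKc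
  have i3 : IntegrableOn (fun y => U a y * U a y ^ (1 - 2 / d : ℝ)) (closedBall x₀ R) :=
    ((h.contx a).mul ((h.contx a).rpow_const fun _ => Or.inr (by linarith))).continuousOn.integrableOn_compact hKc
  calc _ ≤ ∫ y in closedBall x₀ R, (k ^ (1 - 2 / d : ℝ) * U a y +
        k ^ (1 - 2 / d - m : ℝ) * (U a y * U a y ^ m)) := by
        refine integral_mono i3 ((i1.const_mul _).add (i2.const_mul _)) fun y => ?_
        exact pt1 (h.nonneg a y) hk (by linarith) hmc
    _ = k ^ (1 - 2 / d : ℝ) * MM x₀ R U a + k ^ (1 - 2 / d - m : ℝ) * YY m x₀ R U a := by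
        rw [integral_add (i1.const_mul _) (i2.const_mul _), integral_const_mul, integral_const_mul]
        rfl
    _ ≤ _ := by gcongr

lemma hB (h : NSol m x₀ R T U) (a : ℝ) {k : ℝ} (hk : 0 < k) :
    MM x₀ R U a ≤ k * volume.real (closedBall x₀ R) + k ^ (-m) * YY m x₀ R U a := by
  have hKc : IsCompact (closedBall x₀ R) := isCompact_closedBall _ _
  have i1 : IntegrableOn (fun y => U a y) (closedBall x₀ R) :=
    (h.contx a).continuousOn.integrableOn_compact hKc
  have i2 : IntegrableOn (fun y => U a y * U a y ^ m) (closedBall x₀ R) :=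
    ((h.contx a).mul (h.contPx a)).continuousOn.integrableOn_compact hKc
  have i0 : IntegrableOn (fun _ : EE d => k) (closedBall x₀ R) :=
    continuous_const.continuousOn.integrableOn_compact hKc
  calc _ ≤ ∫ y in closedBall x₀ R, (k + k ^ (-m) * (U a y * U a y ^ m)) := by
        refine integral_mono i1 (Integrable.add i0 (i2.const_mul _)) fun y => ?_
        exact pt2 (h.nonneg a y) hk h.m0
    _ = _ := by
        rw [integral_add i0 (i2.const_mul _), integral_const_mul, setIntegral_const, smul_eq_mul,
          mul_comm k]
        rfl

lemma int_pos (h : NSol m x₀ R T U) {t : ℝ} (ht : t ∈ Ioo 0 T) {g : ℝ → ℝ} (hg : Continuous g)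
    (hg0 : g 0 = 0) (hgp : ∀ v > 0, 0 < g v) : 0 < ∫ x in closedBall x₀ R, g (U t x) := by
  have hz : ∀ x, x ∉ closedBall x₀ R → g (U t x) = 0 := by
    intro x hx
    rw [h.zero t x fun h' => hx (ball_subset_closedBall h'), hg0]
  rw [setIntegral_eq_integral_of_forall_compl_eq_zero hz]
  refine Continuous.integral_pos_of_hasCompactSupport_nonneg_nonzero (x := x₀)
    (hg.comp (h.contx t)) (HasCompactSupport.intro (isCompact_closedBall x₀ R) hz) ?_ ?_
  · intro x
    rcases (h.nonneg t x).eq_or_lt with e | e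
    · simp [← e, hg0]
    · exact (hgp _ e).le
  · exact (hgp _ (h.pos t ht x₀ (mem_ball_self h.R0))).ne'

lemma YY_pos (h : NSol m x₀ R T U) {t : ℝ} (ht : t ∈ Ioo 0 T) : 0 < YY m x₀ R U t := by
  have hm := h.m0
  exact h.int_pos ht (g := fun v => v * v ^ m)
    (continuous_id.mul (continuous_id.rpow_const fun _ => Or.inr h.m0.le)) (by simp)
    (fun v hv => by positivity)

lemma MM0_pos (h : NSol m x₀ R T U) : 0 < MM x₀ R U 0 := by
  have ht : T / 2 ∈ Ioo 0 T := ⟨by linarith [h.T0], by linarith [h.T0]⟩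
  have h1 : 0 < MM x₀ R U (T / 2) := h.int_pos ht (g := fun v => v) continuous_id rfl (fun v hv => hv)
  exact h1.trans_le (h.mass_le ht.1.le ht.2.le)

lemma upper_bd (h : NSol m x₀ R T U) (hd : 3 ≤ d) (hmc : 1 - 2 / (d : ℝ) < m) (hm1 : m < 1) :
    T ≤ (1 / ((1 / (2 * CX d)) ^ (m / (1 - 2 / d : ℝ)) * (m / (1 - 2 / d : ℝ) - 1)) +
        1 / ((1 / (3 * 2 ^ (2 / d : ℝ) * CX d)) ^ ((1 + m) / 2) * (1 - (1 + m) / 2))) / (2 * cK d) *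
      MM x₀ R U 0 ^ (1 - m) * volume.real (closedBall x₀ R) ^ (2 / d - (1 - m) : ℝ) := by
  have h3 : (3 : ℝ) ≤ d := by exact_mod_cast hd
  have h2d : 2 / (d : ℝ) < 1 := by rw [div_lt_one (by linarith)]; linarith
  have hKc : IsCompact (closedBall x₀ R) := isCompact_closedBall _ _
  have hm := h.m0
  have hT := h.T0
  have hC := CX_pos d
  have hc := cK_pos hd
  have hM₀ := h.MM0_pos
  set p : ℝ := 2 / d with hp
  set V := volume.real (closedBall x₀ R) with hV
  have hVpos : 0 < V := by
    rw [hV, Measure.real, ENNReal.toReal_pos_iff]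
    exact ⟨measure_closedBall_pos _ _ h.R0, hKc.measure_lt_top⟩
  set M₀ := MM x₀ R U 0 with hM₀d
  set μ := M₀ / V with hμd
  have hμ : 0 < μ := by positivity
  have hVμ : V * μ = M₀ := by rw [hμd]; field_simp
  set G : ℝ → ℝ := fun s => 2 * cK d * (∫ τ in s..T, YY m x₀ R U τ) with hG
  have hYc := h.YY_cont
  have hGd : ∀ s, HasDerivAt G (2 * cK d * (- YY m x₀ R U s)) s := by
    intro s
    refine HasDerivAt.const_mul _ ?_
    exact intervalIntegral.integral_hasDerivAt_left (hYc.intervalIntegrable _ _)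
      hYc.stronglyMeasurable.stronglyMeasurableAtFilter hYc.continuousAt
  have hGc : Continuous G := continuous_iff_continuousAt.2 fun s => (hGd s).continuousAt
  have hGpos : ∀ s ∈ Ico 0 T, 0 < G s := by
    intro s hs
    have : 0 < ∫ τ in s..T, YY m x₀ R U τ :=
      intervalIntegral.intervalIntegral_pos_of_pos_on (hYc.intervalIntegrable _ _)
        (fun τ hτ => h.YY_pos ⟨hs.1.trans_lt hτ.1, hτ.2⟩) hs.2
    simp only [hG]
    positivity
  have hAs : ∀ s ∈ Icc 0 T, ∀ M' > 0, MM x₀ R U s ≤ M' → ∀ k > 0,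
      G s ≤ CX d * M' ^ p * (k ^ (1 - p) * M' + k ^ (1 - p - m) * YY m x₀ R U s) :=
    fun s hs M' hM' hMM k hk => h.hA hd hmc hs hM' hMM hk
  set g := V * V ^ p * μ ^ 2 with hg
  have hgp : 0 < g := by positivity
  set w := V * μ ^ (1 + m) with hw
  have hwp : 0 < w := by positivity
  have key := ode_bd (Γ := fun s => G s / g) (y := fun s => YY m x₀ R U s / w) (T := T)
    (L := 2 * cK d * w / g) (κ₁ := (1 / (2 * CX d)) ^ (m / (1 - p)))
    (κ₂ := (1 / (3 * 2 ^ p * CX d)) ^ ((1 + m) / 2)) (a := m / (1 - p)) (b := (1 + m) / 2)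
    hT (by positivity) (by positivity) (by positivity)
    (by rw [one_lt_div (by linarith)]; exact hmc) (by linarith) (hGc.div_const _)
    (by
      intro s hs
      refine ((hGd s).div_const g).congr_deriv ?_
      have : 2 * cK d * w / g * (YY m x₀ R U s / w) = 2 * cK d * YY m x₀ R U s / g := by field_simp
      rw [this]; ring)
    (fun s hs => div_pos (hGpos s hs) hgp) (by simp [hG])
    (by
      intro s hs
      have hs1 := Ioo_subset_Icc_self hs
      refine alg3 h2d hC (div_pos (hGpos s ⟨hs.1.le, hs.2⟩) hgp) fun θ hθ => ?_
      refine alg1 hVpos hμ (hAs s hs1) ?_ hθ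
      rw [hVμ]
      exact h.mass_le hs.1.le hs.2.le)
    (by
      intro s hs
      have hs1 := Ioo_subset_Icc_self hs
      have hY := h.YY_pos hs
      refine alg4 hm (by positivity) (div_pos (hGpos s ⟨hs.1.le, hs.2⟩) hgp) (by positivity) ?_
      exact alg2 hVpos hμ hm hY (hAs s hs1) fun k hk => h.hB s hk)
  set K := 1 / ((1 / (2 * CX d)) ^ (m / (1 - p)) * (m / (1 - p) - 1)) +
        1 / ((1 / (3 * 2 ^ p * CX d)) ^ ((1 + m) / 2) * (1 - (1 + m) / 2)) with hK
  rw [← le_div_iff₀ (by positivity)] at key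
  refine key.trans (le_of_eq ?_)
  have e1 : g / w = M₀ ^ (1 - m) * V ^ (p - (1 - m)) := by
    have r1 : μ ^ 2 = μ ^ (1 - m) * μ ^ (1 + m) := by
      rw [← Real.rpow_add hμ, ← Real.rpow_natCast]; congr 1; push_cast; ring
    rw [hg, hw, r1]
    have : μ ^ (1 - m) = M₀ ^ (1 - m) / V ^ (1 - m) := by
      rw [hμd, Real.div_rpow hM₀.le hVpos.le]
    rw [Real.rpow_sub hVpos]
    calc _ = V ^ p * μ ^ (1 - m) := by field_simp
      _ = _ := by rw [this]; ring
  calc K / (2 * cK d * w / g) = K / (2 * cK d) * (g / w) := by field_simp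
    _ = _ := by rw [e1]; ring

end NSol

/-- **Theorem 1.3(i): sharp two-sided bounds for the extinction time in the good
fast diffusion range.** -/
theorem extinction_time_two_sided_bounds
    (d : ℕ) (hd : 3 ≤ d) (m : ℝ) (hmc : (d - 2 : ℝ) / d < m) (hm1 : m < 1) :
    ∃ c₁ c₂ : ℝ, 0 < c₁ ∧ 0 < c₂ ∧
      ∀ (x₀ : EuclideanSpace ℝ (Fin d)) (R T : ℝ), 0 < R → 0 < T →
      ∀ (u : ℝ → EuclideanSpace ℝ (Fin d) → ℝ) (u₀ : EuclideanSpace ℝ (Fin d) → ℝ),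
        IsDirichletSol m x₀ R T u u₀ →
        (∀ x ∈ ball x₀ R, 0 ≤ u₀ x) →
        IntegrableOn u₀ (ball x₀ R) →
        (∃ x ∈ ball x₀ R, u₀ x ≠ 0) →
        c₁ * (∫ x in ball x₀ (R / 3), u₀ x) ^ (1 - m) * R ^ (2 - d * (1 - m)) ≤ T ∧
        T ≤ c₂ * (∫ x in ball x₀ R, u₀ x) ^ (1 - m) * R ^ (2 - d * (1 - m)) := by
  have h3 : (3 : ℝ) ≤ d := by exact_mod_cast hd
  have h2d : 2 / (d : ℝ) < 1 := by rw [div_lt_one (by linarith)]; linarith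
  have hmc' : 1 - 2 / (d : ℝ) < m := by
    have : ((d : ℝ) - 2) / d = 1 - 2 / d := by field_simp
    rwa [this] at hmc
  have hm : 0 < m := by linarith
  have hω := omega_pos d
  have hCX := CX_pos d
  have hc := cK_pos hd
  obtain ⟨φ, C, hC, hφ, hφ0, hφ1, hφz, hφL⟩ := exists_test (d := d) hm hm1
  set ω := volume.real (ball (0 : EE d) 1) with hωd
  set K := (1 / ((1 / (2 * CX d)) ^ (m / (1 - 2 / d : ℝ)) * (m / (1 - 2 / d : ℝ) - 1)) +
        1 / ((1 / (3 * 2 ^ (2 / d : ℝ) * CX d)) ^ ((1 + m) / 2) * (1 - (1 + m) / 2))) / (2 * cK d)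
    with hK
  have hKp : 0 < K := by
    have k1 : 0 < m / (1 - 2 / d : ℝ) - 1 := by
      rw [sub_pos, one_lt_div (by linarith)]; exact hmc'
    have k2 : 0 < 1 - (1 + m) / 2 := by linarith
    positivity
  refine ⟨1 / (2 * C * ω ^ (1 - m)), K * ω ^ (2 / d - (1 - m) : ℝ), by positivity, by positivity, ?_⟩
  intro x₀ R T hR hT u u₀ hsol _ _ _
  have h := nsol_of_dirichlet hm hR hT hsol
  have hV : volume.real (closedBall x₀ R) = R ^ d * ω := by
    rw [Measure.addHaar_real_closedBall _ _ hR.le, finrank_euclideanSpace_fin]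
  have hU0 : ∀ x ∈ ball x₀ R, extU x₀ R T u 0 x = u₀ x := by
    intro x hx
    rw [extU_eq ⟨le_rfl, hT.le⟩ (ball_subset_closedBall hx)]
    exact hsol.2.2.2.1 x hx
  have hRd : ∀ e : ℝ, (R ^ d) ^ e = R ^ (d * e) := by
    intro e
    rw [← Real.rpow_natCast, ← Real.rpow_mul hR.le]
  constructor
  · have L := h.lower_bd hm1 hC hφ hφ0 hφ1 hφz hφL
    have e : (∫ x in ball x₀ (R / 3), extU x₀ R T u 0 x) = ∫ x in ball x₀ (R / 3), u₀ x :=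
      setIntegral_congr_fun measurableSet_ball fun x hx =>
        hU0 x (ball_subset_ball (by linarith) hx)
    rw [e, hV, Real.mul_rpow (by positivity) hω.le, hRd] at L
    set I := (∫ x in ball x₀ (R / 3), u₀ x) ^ (1 - m)
    rw [Real.rpow_sub hR, Real.rpow_two]
    have hP : 0 < R ^ (d * (1 - m) : ℝ) := by positivity
    have hW : 0 < ω ^ (1 - m) := by positivity
    calc _ = I * (R ^ 2 / (2 * C * ω ^ (1 - m) * R ^ (d * (1 - m) : ℝ))) := by field_simp
      _ ≤ (2 * C * T * R⁻¹ ^ 2 * (R ^ (d * (1 - m) : ℝ) * ω ^ (1 - m))) *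
          (R ^ 2 / (2 * C * ω ^ (1 - m) * R ^ (d * (1 - m) : ℝ))) := by gcongr
      _ = T := by field_simp
  · have L := h.upper_bd hd hmc' hm1
    have e : NSol.MM x₀ R (extU x₀ R T u) 0 = ∫ x in ball x₀ R, u₀ x := by
      unfold NSol.MM
      rw [← setIntegral_congr_fun measurableSet_ball hU0]
      exact setIntegral_eq_of_subset_of_forall_sdiff_eq_zero measurableSet_closedBall
        ball_subset_closedBall fun x hx => h.zero 0 x hx.2
    rw [e, hV, ← hK, Real.mul_rpow (by positivity) hω.le, hRd] at L
    refine L.trans (le_of_eq ?_)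
    have e2 : (d : ℝ) * (2 / d - (1 - m)) = 2 - d * (1 - m) := by field_simp
    rw [e2]
    ring
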